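/- arXiv:1907.02219 — 2 statements merged into one kernel-verified Lean document; each statement's English description precedes it below -/
import Mathlib

section
/- Let f ∈ Ω_f, ξ ∈ Ω_ξ and s^l₀ ∈ Ω_sl(ξ). Suppose that at the unique optimal solution of the DC-OPF exactly N_G − 1 inequality constraints are binding; let S_G be the set of generators i for which a generation bound is binding and S_B the set of branches e for which a flow bound is binding (so |S_G| + |S_B| = N_G − 1, since s̄ > s̲ and p̄ > p̲ prevent both bounds of a generator or branch from binding simultaneously); and suppose the gradients of these binding inequality constraints together with the gradients of the N+1 equality constraints are linearly independent in ℝ^{N_G+N}. Then: (a) the matrix R(S_G,S_B)ᵀ is invertible; and (b) there exists an open set U with s^l₀ ∈ U ⊆ Ω_sl(ξ) such that the set of binding inequality constraints at the unique optimum is the same for every s^l ∈ U and the OPF map is affine on U with OPF(s^l) = OPF(s^l₀) + J(S_G,S_B)·(s^l − s^l₀) for all s^l ∈ U; in particular, the OPF map is Fréchet differentiable at s^l₀ with derivative J(S_G,S_B). -/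
open Matrix

noncomputable section

/-- Parameter tuple ξ = (s̄, s̲, p̄, p̲). -/
abbrev XiT (NG E : ℕ) : Type := (Fin NG → ℝ) × (Fin NG → ℝ) × (Fin E → ℝ) × (Fin E → ℝ)

/-- Each column of `C` has exactly one `+1`, one `-1`, and zeros elsewhere. -/
def IsIncidence {NG NL E : ℕ} (C : Matrix (Fin (NG + NL)) (Fin E) ℝ) : Prop :=
  ∀ e : Fin E, ∃ u v : Fin (NG + NL), u ≠ v ∧ C u e = 1 ∧ C v e = -1 ∧
    ∀ w : Fin (NG + NL), w ≠ u → w ≠ v → C w e = 0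

/-- Connectedness: the kernel of `Cᵀ` consists exactly of the constant vectors. -/
def ConnectedIncidence {NG NL E : ℕ} (C : Matrix (Fin (NG + NL)) (Fin E) ℝ) : Prop :=
  ∀ x : Fin (NG + NL) → ℝ, Cᵀ *ᵥ x = 0 ↔ ∃ c : ℝ, x = fun _ => c

/-- `B` is diagonal with strictly positive diagonal entries. -/
def PosDiag {E : ℕ} (B : Matrix (Fin E) (Fin E) ℝ) : Prop :=
  (∀ e, 0 < B e e) ∧ ∀ e e' : Fin E, e ≠ e' → B e e' = 0

/-- Feasibility of `(s^g, θ)` for the DC-OPF with limits `ξ` and loads `sl`. -/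
def Feasible {NG NL E : ℕ} (C : Matrix (Fin (NG + NL)) (Fin E) ℝ)
    (B : Matrix (Fin E) (Fin E) ℝ) (ξ : XiT NG E) (sl : Fin NL → ℝ)
    (sg : Fin NG → ℝ) (θ : Fin (NG + NL) → ℝ) : Prop :=
  (∀ h : 0 < NG + NL, θ ⟨0, h⟩ = 0) ∧
  (C * B * Cᵀ) *ᵥ θ = Fin.append sg (fun j => -(sl j)) ∧
  (∀ i, ξ.2.1 i ≤ sg i ∧ sg i ≤ ξ.1 i) ∧
  (∀ e, ξ.2.2.2 e ≤ ((B * Cᵀ) *ᵥ θ) e ∧ ((B * Cᵀ) *ᵥ θ) e ≤ ξ.2.2.1 e)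

/-- The set Ω_ξ of admissible system limits. -/
def OmegaXi {NG NL E : ℕ} (C : Matrix (Fin (NG + NL)) (Fin E) ℝ)
    (B : Matrix (Fin E) (Fin E) ℝ) : Set (XiT NG E) :=
  { ξ | (∀ i, 0 ≤ ξ.2.1 i) ∧ (∀ i, ξ.2.1 i < ξ.1 i) ∧ (∀ e, ξ.2.2.2 e < ξ.2.2.1 e) ∧
    ∃ sl : Fin NL → ℝ, (∀ j, 0 < sl j) ∧ ∃ sg θ, Feasible C B ξ sl sg θ }

/-- The set Ω_sl(ξ) of strictly positive feasible load profiles. -/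
def OmegaSl {NG NL E : ℕ} (C : Matrix (Fin (NG + NL)) (Fin E) ℝ)
    (B : Matrix (Fin E) (Fin E) ℝ) (ξ : XiT NG E) : Set (Fin NL → ℝ) :=
  { sl | (∀ j, 0 < sl j) ∧ ∃ sg θ, Feasible C B ξ sl sg θ }

/-- `(sg, θ)` is an optimal solution of the DC-OPF. -/
def IsOptimal {NG NL E : ℕ} (C : Matrix (Fin (NG + NL)) (Fin E) ℝ)
    (B : Matrix (Fin E) (Fin E) ℝ) (f : Fin NG → ℝ) (ξ : XiT NG E)
    (sl : Fin NL → ℝ) (sg : Fin NG → ℝ) (θ : Fin (NG + NL) → ℝ) : Prop :=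
  Feasible C B ξ sl sg θ ∧
  ∀ sg' θ', Feasible C B ξ sl sg' θ' → f ⬝ᵥ sg ≤ f ⬝ᵥ sg'

/-- The matrix M: first N rows are C B Cᵀ, last row is e₁ᵀ. -/
def Mmat {NG NL E : ℕ} (C : Matrix (Fin (NG + NL)) (Fin E) ℝ)
    (B : Matrix (Fin E) (Fin E) ℝ) : Matrix (Fin (NG + NL + 1)) (Fin (NG + NL)) ℝ :=
  Matrix.of fun i j => if h : (i : ℕ) < NG + NL then (C * B * Cᵀ) ⟨(i : ℕ), h⟩ j
    else if (j : ℕ) = 0 then 1 else 0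

/-- KKT point for the DC-OPF. -/
def IsKKT {NG NL E : ℕ} (C : Matrix (Fin (NG + NL)) (Fin E) ℝ)
    (B : Matrix (Fin E) (Fin E) ℝ) (f : Fin NG → ℝ) (ξ : XiT NG E)
    (sl : Fin NL → ℝ) (sg : Fin NG → ℝ) (θ : Fin (NG + NL) → ℝ)
    (τ : Fin (NG + NL + 1) → ℝ) (μp μm : Fin E → ℝ) (lp lm : Fin NG → ℝ) : Prop :=
  Feasible C B ξ sl sg θ ∧
  (Mmat C B)ᵀ *ᵥ τ + (C * B) *ᵥ (μp - μm) = 0 ∧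
  (∀ i : Fin NG, -f i = -τ (Fin.castLE (by omega) i) + lp i - lm i) ∧
  (∀ e, 0 ≤ μp e) ∧ (∀ e, 0 ≤ μm e) ∧ (∀ i, 0 ≤ lp i) ∧ (∀ i, 0 ≤ lm i) ∧
  μp ⬝ᵥ (((B * Cᵀ) *ᵥ θ) - ξ.2.2.1) = 0 ∧
  μm ⬝ᵥ (ξ.2.2.2 - ((B * Cᵀ) *ᵥ θ)) = 0 ∧
  lp ⬝ᵥ (sg - ξ.1) = 0 ∧
  lm ⬝ᵥ (ξ.2.1 - sg) = 0

/-- ℓ₀ "norm": number of nonzero entries. -/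
def nnz {n : ℕ} (v : Fin n → ℝ) : ℕ := Set.ncard { i | v i ≠ 0 }

/-- The set Ω_f of well-behaved cost vectors. -/
def OmegaF {NG NL E : ℕ} (C : Matrix (Fin (NG + NL)) (Fin E) ℝ)
    (B : Matrix (Fin E) (Fin E) ℝ) : Set (Fin NG → ℝ) :=
  { f | (∀ i, 0 ≤ f i) ∧
    ∀ ξ ∈ OmegaXi C B, ∀ sl ∈ OmegaSl C B ξ,
      (∃! p : (Fin NG → ℝ) × (Fin (NG + NL) → ℝ), IsOptimal C B f ξ sl p.1 p.2) ∧
      ∀ sg θ τ μp μm lp lm, IsKKT C B f ξ sl sg θ τ μp μm lp lm →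
        NG - 1 ≤ nnz μp + nnz μm + nnz lp + nnz lm }

/-- Number of binding inequality constraints at `(sg, θ)` (among the 2N_G + 2E). -/
def bindingCount {NG NL E : ℕ} (C : Matrix (Fin (NG + NL)) (Fin E) ℝ)
    (B : Matrix (Fin E) (Fin E) ℝ) (ξ : XiT NG E) (sg : Fin NG → ℝ)
    (θ : Fin (NG + NL) → ℝ) : ℕ :=
  Set.ncard { i : Fin NG | sg i = ξ.1 i } + Set.ncard { i : Fin NG | sg i = ξ.2.1 i } +
  Set.ncard { e : Fin E | ((B * Cᵀ) *ᵥ θ) e = ξ.2.2.1 e } +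
  Set.ncard { e : Fin E | ((B * Cᵀ) *ᵥ θ) e = ξ.2.2.2 e }

/-- ~Ω_sl(ξ, f): loads with exactly N_G − 1 binding constraints at the optimum. -/
def TOmegaSl {NG NL E : ℕ} (C : Matrix (Fin (NG + NL)) (Fin E) ℝ)
    (B : Matrix (Fin E) (Fin E) ℝ) (f : Fin NG → ℝ) (ξ : XiT NG E) :
    Set (Fin NL → ℝ) :=
  { sl | sl ∈ OmegaSl C B ξ ∧
    ∀ sg θ, IsOptimal C B f ξ sl sg θ → bindingCount C B ξ sg θ = NG - 1 }

/-- Indices of binding inequality constraints: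
`inl i` = upper generation, `inr (inl i)` = lower generation,
`inr (inr (inl e))` = upper flow, `inr (inr (inr e))` = lower flow. -/
def BindingIdx {NG NL E : ℕ} (C : Matrix (Fin (NG + NL)) (Fin E) ℝ)
    (B : Matrix (Fin E) (Fin E) ℝ) (ξ : XiT NG E) (sg : Fin NG → ℝ)
    (θ : Fin (NG + NL) → ℝ) : Set (Fin NG ⊕ Fin NG ⊕ Fin E ⊕ Fin E) :=
  { c | match c with
    | Sum.inl i => sg i = ξ.1 i
    | Sum.inr (Sum.inl i) => sg i = ξ.2.1 i
    | Sum.inr (Sum.inr (Sum.inl e)) => ((B * Cᵀ) *ᵥ θ) e = ξ.2.2.1 e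
    | Sum.inr (Sum.inr (Sum.inr e)) => ((B * Cᵀ) *ᵥ θ) e = ξ.2.2.2 e }

/-- Gradients of the N + 1 equality constraints, as vectors in ℝ^{N_G} × ℝ^{N}. -/
def eqGrad {NG NL E : ℕ} (C : Matrix (Fin (NG + NL)) (Fin E) ℝ)
    (B : Matrix (Fin E) (Fin E) ℝ) :
    (Unit ⊕ Fin (NG + NL)) → (Fin NG → ℝ) × (Fin (NG + NL) → ℝ)
  | Sum.inl _ => (0, fun j => if (j : ℕ) = 0 then 1 else 0)
  | Sum.inr i => ((fun k : Fin NG => if (k : ℕ) = (i : ℕ) then -1 else 0),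
      fun j => (C * B * Cᵀ) i j)

/-- Gradients of the inequality constraints. -/
def ineqGrad {NG NL E : ℕ} (C : Matrix (Fin (NG + NL)) (Fin E) ℝ)
    (B : Matrix (Fin E) (Fin E) ℝ) :
    (Fin NG ⊕ Fin NG ⊕ Fin E ⊕ Fin E) → (Fin NG → ℝ) × (Fin (NG + NL) → ℝ)
  | Sum.inl i => (Pi.single i 1, 0)
  | Sum.inr (Sum.inl i) => (-Pi.single i 1, 0)
  | Sum.inr (Sum.inr (Sum.inl e)) => (0, fun j => (B * Cᵀ) e j)
  | Sum.inr (Sum.inr (Sum.inr e)) => (0, fun j => -(B * Cᵀ) e j)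

/-- The family of gradients of all equality constraints together with the binding
inequality constraints at `(sg, θ)`. -/
def fullGrad {NG NL E : ℕ} (C : Matrix (Fin (NG + NL)) (Fin E) ℝ)
    (B : Matrix (Fin E) (Fin E) ℝ) (ξ : XiT NG E) (sg : Fin NG → ℝ)
    (θ : Fin (NG + NL) → ℝ) :
    ((Unit ⊕ Fin (NG + NL)) ⊕ ↥(BindingIdx C B ξ sg θ)) →
      (Fin NG → ℝ) × (Fin (NG + NL) → ℝ) :=
  fun i => match i with
    | Sum.inl j => eqGrad C B j
    | Sum.inr c => ineqGrad C B c.1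

/-- S_G ⊥ S_B : the equality-constraint gradients together with the gradients
`(e_i, 0)`, `i ∈ S_G`, and `(0, row e of B Cᵀ)`, `e ∈ S_B`, are linearly independent. -/
def Perp {NG NL E : ℕ} (C : Matrix (Fin (NG + NL)) (Fin E) ℝ)
    (B : Matrix (Fin E) (Fin E) ℝ) (SG : Finset (Fin NG)) (SB : Finset (Fin E)) : Prop :=
  LinearIndependent ℝ (fun i : (Unit ⊕ Fin (NG + NL)) ⊕ (↥SG ⊕ ↥SB) =>
    match i with
    | Sum.inl j => eqGrad C B j
    | Sum.inr (Sum.inl g) => ((Pi.single (g : Fin NG) 1 : Fin NG → ℝ), (0 : Fin (NG + NL) → ℝ))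
    | Sum.inr (Sum.inr e) => ((0 : Fin NG → ℝ), fun j => (B * Cᵀ) (e : Fin E) j))

/-- The OPF operator: the generation part of the (unique) optimal solution. -/
def OPFmap {NG NL E : ℕ} (C : Matrix (Fin (NG + NL)) (Fin E) ℝ)
    (B : Matrix (Fin E) (Fin E) ℝ) (f : Fin NG → ℝ) (ξ : XiT NG E)
    (sl : Fin NL → ℝ) : Fin NG → ℝ := by
  classical
  exact if h : ∃ p : (Fin NG → ℝ) × (Fin (NG + NL) → ℝ), IsOptimal C B f ξ sl p.1 p.2
    then h.choose.1 else 0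

/-- The matrix R(S_G, S_B)ᵀ: rows N_G+1,…,N of C B Cᵀ; the rows of C B Cᵀ indexed
by S_G; the rows of B Cᵀ indexed by S_B; and e₁ᵀ. -/
def Rmat {NG NL E : ℕ} (C : Matrix (Fin (NG + NL)) (Fin E) ℝ)
    (B : Matrix (Fin E) (Fin E) ℝ) (SG : Finset (Fin NG)) (SB : Finset (Fin E)) :
    Matrix ((Fin NL ⊕ (↥SG ⊕ ↥SB)) ⊕ Unit) (Fin (NG + NL)) ℝ :=
  Matrix.of fun i j => match i with
    | Sum.inl (Sum.inl k) => (C * B * Cᵀ) (Fin.natAdd NG k) j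
    | Sum.inl (Sum.inr (Sum.inl g)) => (C * B * Cᵀ) (Fin.castAdd NL (g : Fin NG)) j
    | Sum.inl (Sum.inr (Sum.inr e)) => (B * Cᵀ) (e : Fin E) j
    | Sum.inr _ => if (j : ℕ) = 0 then 1 else 0

/-- The matrix Π applied to a load vector: embeds ℝ^{N_L} in the row-index space. -/
def padSl {NG NL E : ℕ} (SG : Finset (Fin NG)) (SB : Finset (Fin E))
    (v : Fin NL → ℝ) : (Fin NL ⊕ (↥SG ⊕ ↥SB)) ⊕ Unit → ℝ
  | Sum.inl (Sum.inl k) => v k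
  | _ => 0

/-- J(S_G, S_B) as a map: v ↦ −G (R(S_G,S_B)ᵀ)⁻¹ Π v, where G consists of the
first N_G rows of C B Cᵀ. -/
def JFun {NG NL E : ℕ} (C : Matrix (Fin (NG + NL)) (Fin E) ℝ)
    (B : Matrix (Fin E) (Fin E) ℝ) (SG : Finset (Fin NG)) (SB : Finset (Fin E))
    (v : Fin NL → ℝ) : Fin NG → ℝ :=
  fun i =>
    -(((C * B * Cᵀ) *ᵥ (Function.invFun (Rmat C B SG SB).mulVec (padSl SG SB v)))
      (Fin.castAdd NL i))

/-- J(S_G, S_B) as an N_G × N_L matrix. -/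
def Jmatrix {NG NL E : ℕ} (C : Matrix (Fin (NG + NL)) (Fin E) ℝ)
    (B : Matrix (Fin E) (Fin E) ℝ) (SG : Finset (Fin NG)) (SB : Finset (Fin E)) :
    Matrix (Fin NG) (Fin NL) ℝ :=
  Matrix.of fun i j => JFun C B SG SB (Pi.single j 1) i

/-!
The DC-OPF is a linear program `min φ x` subject to `α x = b`, `a x ≤ u`, in which the load only
enters the right-hand side `b`. If `x` is feasible for `b` and every constraint active at a unique
minimizer `x₀` for `b₀` is also active at `x`, then `x` is the unique minimizer for `b`: a
competitor `y` of `x` yields the competitor `x₀ + t • (y - x)` of `x₀` for small `t > 0`. Hence a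
unique minimizer is continued by any affine path of solutions of `α x = b` that keeps the active
constraints active.

For the DC-OPF such a path is found from the angles alone. Eliminating the generation turns
"the balance equations hold with load `v` and the binding constraints are kept" into
`R(S_G, S_B)ᵀ θ = -Π v`. The kernel of `R(S_G, S_B)ᵀ` is trivial, because it consists of vectors
orthogonal to all the gradients of the equality and binding constraints, and these gradients are
`N_G + N` independent vectors.
-/

section ParametricLinearProgram

open Filter Topology

variable {V ι κ : Type*} [AddCommGroup V] [Module ℝ V]

/-- `x` is the only minimizer of `φ` on `s`. -/
def IsUniqueMinOn {X : Type*} (φ : X → ℝ) (s : Set X) (x : X) : Prop :=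
  x ∈ s ∧ ∀ y ∈ s, φ y ≤ φ x → y = x

/-- The polyhedron `{x | α x = b, a x ≤ u}`: the feasible set of a linear program. -/
def linearFeasibleSet (α : ι → Module.Dual ℝ V) (b : ι → ℝ) (a : κ → Module.Dual ℝ V)
    (u : κ → ℝ) : Set V :=
  {x | (∀ i, α i x = b i) ∧ ∀ c, a c x ≤ u c}

/-- The indices of the inequality constraints `a x ≤ u` that are tight at `x`. -/
def activeSet (a : κ → Module.Dual ℝ V) (u : κ → ℝ) (x : V) : Set κ :=
  {c | a c x = u c}

variable {α : ι → Module.Dual ℝ V} {a : κ → Module.Dual ℝ V} {u : κ → ℝ}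

lemma eventually_add_smul_sub_mem_linearFeasibleSet [Finite κ] {b₀ b : ι → ℝ} {x₀ x y : V}
    (hx₀ : x₀ ∈ linearFeasibleSet α b₀ a u) (hx : x ∈ linearFeasibleSet α b a u)
    (hy : y ∈ linearFeasibleSet α b a u) (hact : activeSet a u x₀ ⊆ activeSet a u x) :
    ∀ᶠ t : ℝ in 𝓝[>] 0, x₀ + t • (y - x) ∈ linearFeasibleSet α b₀ a u := by
  have hineq : ∀ c, ∀ᶠ t : ℝ in 𝓝[>] 0, a c (x₀ + t • (y - x)) ≤ u c := by
    intro c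
    simp only [map_add, map_smul, map_sub, smul_eq_mul]
    rcases (hx₀.2 c).lt_or_eq with hslack | htight
    · have hcont : Continuous fun t : ℝ => a c x₀ + t * (a c y - a c x) := by fun_prop
      have hlt : ∀ᶠ t : ℝ in 𝓝 0, a c x₀ + t * (a c y - a c x) < u c :=
        hcont.continuousAt.eventually_lt_const (by simpa using hslack)
      exact (hlt.filter_mono nhdsWithin_le_nhds).mono fun _ ht => ht.le
    · have hdescent : a c y - a c x ≤ 0 := by
        rw [show a c x = u c from hact htight]
        exact sub_nonpos.2 (hy.2 c)
      filter_upwards [self_mem_nhdsWithin] with t ht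
      linarith [mul_nonpos_of_nonneg_of_nonpos (Set.mem_Ioi.1 ht).le hdescent]
  filter_upwards [eventually_all.2 hineq] with t ht
  exact ⟨fun i => by simp [hx₀.1 i, hx.1 i, hy.1 i], ht⟩

lemma IsUniqueMinOn.of_activeSet_subset [Finite κ] {φ : Module.Dual ℝ V} {b₀ b : ι → ℝ} {x₀ x : V}
    (hmin : IsUniqueMinOn φ (linearFeasibleSet α b₀ a u) x₀)
    (hx : x ∈ linearFeasibleSet α b a u) (hact : activeSet a u x₀ ⊆ activeSet a u x) :
    IsUniqueMinOn φ (linearFeasibleSet α b a u) x := by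
  refine ⟨hx, fun y hy hle => ?_⟩
  obtain ⟨t, hmem, ht⟩ := ((eventually_add_smul_sub_mem_linearFeasibleSet hmin.1 hx hy hact).and
    self_mem_nhdsWithin).exists
  have ht : 0 < t := ht
  have hcost : φ (x₀ + t • (y - x)) ≤ φ x₀ := by
    simp only [map_add, map_smul, map_sub, smul_eq_mul]
    linarith [mul_nonpos_of_nonneg_of_nonpos ht.le (sub_nonpos.2 hle)]
  simpa [ht.ne', sub_eq_zero] using hmin.2 _ hmem hcost

theorem IsUniqueMinOn.eventually_of_activeSet_preserved [Finite κ] {P : Type*}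
    [TopologicalSpace P] {φ : Module.Dual ℝ V} {b : P → ι → ℝ} {x : P → V} {p₀ : P}
    (hmin : IsUniqueMinOn φ (linearFeasibleSet α (b p₀) a u) (x p₀))
    (heq : ∀ p i, α i (x p) = b p i) (hcont : ∀ c, ContinuousAt (fun p => a c (x p)) p₀)
    (hact : ∀ c ∈ activeSet a u (x p₀), ∀ p, a c (x p) = u c) :
    ∀ᶠ p in 𝓝 p₀, activeSet a u (x p) = activeSet a u (x p₀) ∧
      IsUniqueMinOn φ (linearFeasibleSet α (b p) a u) (x p) := by
  have hslack : ∀ c, ∀ᶠ p in 𝓝 p₀, c ∉ activeSet a u (x p₀) → a c (x p) < u c := fun c =>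
    eventually_imp_distrib_left.2 fun hc =>
      (hcont c).eventually_lt_const ((hmin.1.2 c).lt_of_ne hc)
  filter_upwards [eventually_all.2 hslack] with p hp
  have hle : ∀ c, a c (x p) ≤ u c := fun c =>
    (em (c ∈ activeSet a u (x p₀))).elim (fun hc => (hact c hc p).le) fun hc => (hp c hc).le
  have hsub : activeSet a u (x p₀) ⊆ activeSet a u (x p) := fun c hc => hact c hc p
  refine ⟨hsub.antisymm' fun c hc => ?_, hmin.of_activeSet_subset ⟨heq p, hle⟩ hsub⟩
  by_contra hc₀
  exact (hp c hc₀).ne hc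

end ParametricLinearProgram

lemma hasFDerivAt_of_eventuallyEq_affine {𝕜 X Y : Type*} [NontriviallyNormedField 𝕜]
    [NormedAddCommGroup X] [NormedSpace 𝕜 X] [NormedAddCommGroup Y] [NormedSpace 𝕜 Y]
    {g : X → Y} {J : X →L[𝕜] Y} {x₀ : X} {y₀ : Y}
    (h : g =ᶠ[nhds x₀] fun x => y₀ + J (x - x₀)) : HasFDerivAt g J x₀ := by
  simp only [map_sub] at h
  exact ((J.hasFDerivAt.sub_const _).const_add y₀).congr_of_eventuallyEq h

section GradientPairing

variable {m n : Type*} [Fintype m] [Fintype n]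

/-- The Euclidean inner product on `ℝ^m × ℝ^n`, through which a gradient acts on a point
`(s^g, θ)`. -/
def pairing : (m → ℝ) × (n → ℝ) →ₗ[ℝ] Module.Dual ℝ ((m → ℝ) × (n → ℝ)) :=
  LinearMap.mk₂ ℝ (fun w z => w.1 ⬝ᵥ z.1 + w.2 ⬝ᵥ z.2)
    (fun w w' z => by simp only [Prod.fst_add, Prod.snd_add, add_dotProduct]; ring)
    (fun r w z => by simp [mul_add])
    (fun w z z' => by simp only [Prod.fst_add, Prod.snd_add, dotProduct_add]; ring)
    (fun r w z => by simp [mul_add])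

lemma pairing_apply (w z : (m → ℝ) × (n → ℝ)) : pairing w z = w.1 ⬝ᵥ z.1 + w.2 ⬝ᵥ z.2 := rfl

lemma pairing_self_eq_zero {z : (m → ℝ) × (n → ℝ)} : pairing z z = 0 ↔ z = 0 := by
  have hfst : 0 ≤ z.1 ⬝ᵥ z.1 := Fintype.sum_nonneg fun i => mul_self_nonneg (z.1 i)
  have hsnd : 0 ≤ z.2 ⬝ᵥ z.2 := Fintype.sum_nonneg fun i => mul_self_nonneg (z.2 i)
  rw [pairing_apply, add_eq_zero_iff_of_nonneg hfst hsnd, dotProduct_self_eq_zero,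
    dotProduct_self_eq_zero, Prod.ext_iff]
  rfl

lemma eq_zero_of_forall_pairing_eq_zero {ι : Type*} {w : ι → (m → ℝ) × (n → ℝ)}
    (hspan : Submodule.span ℝ (Set.range w) = ⊤) {z : (m → ℝ) × (n → ℝ)}
    (hz : ∀ i, pairing (w i) z = 0) : z = 0 := by
  have hflip : pairing.flip z = 0 := LinearMap.ext_on_range hspan hz
  exact pairing_self_eq_zero.1 (LinearMap.congr_fun hflip z)

end GradientPairing

section OptimalPowerFlow

open scoped Topology

variable {NG NL E : ℕ} {C : Matrix (Fin (NG + NL)) (Fin E) ℝ} {B : Matrix (Fin E) (Fin E) ℝ}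
  {f : Fin NG → ℝ} {ξ : XiT NG E} {sl sl₀ v : Fin NL → ℝ} {sg : Fin NG → ℝ}
  {θ x : Fin (NG + NL) → ℝ} {SG : Finset (Fin NG)} {SB : Finset (Fin E)}

/-- The right-hand sides of the equality constraints, ordered like `eqGrad`: the slack angle, then
the nodal balances with the generation moved to the left. -/
def demandRhs (NG : ℕ) (sl : Fin NL → ℝ) : Unit ⊕ Fin (NG + NL) → ℝ :=
  Sum.elim 0 (Fin.append 0 (-sl))

/-- The right-hand sides of the inequality constraints in the form `≤`, ordered like
`ineqGrad`. -/
def limitRhs (ξ : XiT NG E) : Fin NG ⊕ Fin NG ⊕ Fin E ⊕ Fin E → ℝ :=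
  Sum.elim ξ.1 (Sum.elim (-ξ.2.1) (Sum.elim ξ.2.2.1 (-ξ.2.2.2)))

/-- The feasible set of the DC-OPF, as the polyhedron cut out by the constraint gradients. -/
def opfFeasibleSet (C : Matrix (Fin (NG + NL)) (Fin E) ℝ) (B : Matrix (Fin E) (Fin E) ℝ)
    (ξ : XiT NG E) (sl : Fin NL → ℝ) : Set ((Fin NG → ℝ) × (Fin (NG + NL) → ℝ)) :=
  linearFeasibleSet (fun i => pairing (eqGrad C B i)) (demandRhs NG sl)
    (fun c => pairing (ineqGrad C B c)) (limitRhs ξ)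

lemma demandRhs_sub (sl sl' : Fin NL → ℝ) :
    demandRhs NG (sl - sl') = demandRhs NG sl - demandRhs NG sl' := by
  funext i
  rcases i with u | i
  · simp [demandRhs]
  · induction i using Fin.addCases <;> simp [demandRhs]; ring

lemma pairing_eqGrad_inl_eq_zero (u : Unit) :
    pairing (eqGrad C B (Sum.inl u)) (sg, θ) = 0 ↔ ∀ h : 0 < NG + NL, θ ⟨0, h⟩ = 0 := by
  have hrow (h : 0 < NG + NL) : pairing (eqGrad C B (Sum.inl u)) (sg, θ) = θ ⟨0, h⟩ := by
    have hindicator : (fun j : Fin (NG + NL) => if (j : ℕ) = 0 then (1 : ℝ) else 0) =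
        Pi.single ⟨0, h⟩ 1 := by
      funext j
      simp [Pi.single_apply, Fin.ext_iff]
    simp [pairing_apply, eqGrad, hindicator]
  rcases (NG + NL).eq_zero_or_pos with h | h
  · have : IsEmpty (Fin (NG + NL)) := by rw [h]; infer_instance
    simp [pairing_apply, eqGrad, h]
  · simp [hrow h, h]

lemma pairing_eqGrad_inr (i : Fin (NG + NL)) :
    pairing (eqGrad C B (Sum.inr i)) (sg, θ) =
      ((C * B * Cᵀ) *ᵥ θ) i - Fin.append sg (0 : Fin NL → ℝ) i := by
  have hgen : (fun k : Fin NG => if (k : ℕ) = (i : ℕ) then (-1 : ℝ) else 0) ⬝ᵥ sg =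
      -Fin.append sg (0 : Fin NL → ℝ) i := by
    induction i using Fin.addCases with
    | left i => simp [dotProduct, ← Fin.ext_iff]
    | right k =>
      have hne (j : Fin NG) : (j : ℕ) ≠ NG + k := by omega
      simp [dotProduct, hne]
  rw [pairing_apply, sub_eq_neg_add, ← hgen]
  rfl

lemma pairing_ineqGrad (c : Fin NG ⊕ Fin NG ⊕ Fin E ⊕ Fin E) :
    pairing (ineqGrad C B c) (sg, θ) =
      Sum.elim sg (Sum.elim (-sg) (Sum.elim ((B * Cᵀ) *ᵥ θ) (-((B * Cᵀ) *ᵥ θ)))) c := by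
  rcases c with i | i | e | e
  · simp [pairing_apply, ineqGrad]
  · simp [pairing_apply, ineqGrad]
  · simp [pairing_apply, ineqGrad, mulVec]
  · have hneg : (fun j => -(B * Cᵀ) e j) = -(B * Cᵀ) e := rfl
    simp [pairing_apply, ineqGrad, mulVec, hneg]

lemma balance_iff_pairing_eqGrad :
    (C * B * Cᵀ) *ᵥ θ = Fin.append sg (fun j => -(sl j)) ↔
      ∀ i, pairing (eqGrad C B (Sum.inr i)) (sg, θ) = demandRhs NG sl (Sum.inr i) := by
  simp only [funext_iff, pairing_eqGrad_inr, sub_eq_iff_eq_add]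
  refine forall_congr' fun i => ?_
  induction i using Fin.addCases <;> simp [demandRhs]

lemma mem_opfFeasibleSet : (sg, θ) ∈ opfFeasibleSet C B ξ sl ↔ Feasible C B ξ sl sg θ := by
  have hslack : (∀ u, pairing (eqGrad C B (Sum.inl u)) (sg, θ) = demandRhs NG sl (Sum.inl u)) ↔
      ∀ h : 0 < NG + NL, θ ⟨0, h⟩ = 0 :=
    (forall_const Unit).trans (pairing_eqGrad_inl_eq_zero ())
  have hlimits : (∀ c, pairing (ineqGrad C B c) (sg, θ) ≤ limitRhs ξ c) ↔
      (∀ i, ξ.2.1 i ≤ sg i ∧ sg i ≤ ξ.1 i) ∧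
        ∀ e, ξ.2.2.2 e ≤ ((B * Cᵀ) *ᵥ θ) e ∧ ((B * Cᵀ) *ᵥ θ) e ≤ ξ.2.2.1 e := by
    simp only [pairing_ineqGrad, limitRhs, Sum.forall, Sum.elim_inl, Sum.elim_inr, Pi.neg_apply,
      neg_le_neg_iff, forall_and]
    tauto
  rw [opfFeasibleSet, linearFeasibleSet, Set.mem_ofPred_eq, hlimits, Sum.forall, hslack,
    ← balance_iff_pairing_eqGrad, Feasible, and_assoc]

lemma bindingIdx_eq_activeSet :
    BindingIdx C B ξ sg θ = activeSet (fun c => pairing (ineqGrad C B c)) (limitRhs ξ) (sg, θ) := by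
  ext c
  rcases c with i | i | e | e <;> simp [BindingIdx, activeSet, pairing_ineqGrad, limitRhs]

lemma isUniqueMinOn_opfFeasibleSet :
    IsUniqueMinOn (pairing (f, 0)) (opfFeasibleSet C B ξ sl) (sg, θ) ↔
      IsOptimal C B f ξ sl sg θ ∧ ∀ sg' θ', IsOptimal C B f ξ sl sg' θ' → sg' = sg ∧ θ' = θ := by
  simp only [IsUniqueMinOn, IsOptimal, Prod.forall, mem_opfFeasibleSet, pairing_apply,
    zero_dotProduct, add_zero, Prod.mk.injEq]
  constructor
  · rintro ⟨hfeas, huniq⟩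
    refine ⟨⟨hfeas, fun sg' θ' h' => ?_⟩, fun sg' θ' h' => huniq sg' θ' h'.1 (h'.2 _ _ hfeas)⟩
    by_contra! hlt
    exact hlt.ne (by rw [(huniq sg' θ' h' hlt.le).1])
  · rintro ⟨⟨hfeas, hmin⟩, huniq⟩
    exact ⟨hfeas, fun sg' θ' h' hle =>
      huniq sg' θ' ⟨h', fun sg'' θ'' h'' => hle.trans (hmin _ _ h'')⟩⟩

lemma OPFmap_eq_of_isUniqueMinOn
    (h : IsUniqueMinOn (pairing (f, 0)) (opfFeasibleSet C B ξ sl) (sg, θ)) :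
    OPFmap C B f ξ sl = sg := by
  obtain ⟨hopt, huniq⟩ := isUniqueMinOn_opfFeasibleSet.1 h
  have hex : ∃ p : (Fin NG → ℝ) × (Fin (NG + NL) → ℝ), IsOptimal C B f ξ sl p.1 p.2 :=
    ⟨(sg, θ), hopt⟩
  rw [OPFmap, dif_pos hex]
  exact (huniq _ _ hex.choose_spec).1

/-- The generator or branch that an inequality constraint limits. -/
def limitedElement : Fin NG ⊕ Fin NG ⊕ Fin E ⊕ Fin E → Fin NG ⊕ Fin E :=
  Sum.elim Sum.inl (Sum.elim Sum.inl (Sum.elim Sum.inr Sum.inr))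

lemma image_limitedElement_bindingIdx
    (hSG : ∀ i, i ∈ SG ↔ (sg i = ξ.1 i ∨ sg i = ξ.2.1 i))
    (hSB : ∀ e, e ∈ SB ↔
      (((B * Cᵀ) *ᵥ θ) e = ξ.2.2.1 e ∨ ((B * Cᵀ) *ᵥ θ) e = ξ.2.2.2 e)) :
    limitedElement '' BindingIdx C B ξ sg θ = ↑(SG.disjSum SB) := by
  ext (i | e) <;> simp [limitedElement, BindingIdx, hSG, hSB]

/-- The point `(s^g, θ)` with angles `θ` whose generation balances the generator buses. -/
def dispatchOfAngle (C : Matrix (Fin (NG + NL)) (Fin E) ℝ) (B : Matrix (Fin E) (Fin E) ℝ) :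
    (Fin (NG + NL) → ℝ) →ₗ[ℝ] (Fin NG → ℝ) × (Fin (NG + NL) → ℝ) :=
  (LinearMap.funLeft ℝ ℝ (Fin.castAdd NL) ∘ₗ (C * B * Cᵀ).mulVecLin).prod LinearMap.id

lemma dispatchOfAngle_apply (x : Fin (NG + NL) → ℝ) :
    dispatchOfAngle C B x = (fun i => ((C * B * Cᵀ) *ᵥ x) (Fin.castAdd NL i), x) := rfl

/-- The linear map `Π`, with underlying function `padSl`. -/
def padSlLin (SG : Finset (Fin NG)) (SB : Finset (Fin E)) :
    (Fin NL → ℝ) →ₗ[ℝ] ((Fin NL ⊕ (↥SG ⊕ ↥SB)) ⊕ Unit → ℝ) where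
  toFun := padSl SG SB
  map_add' v w := by
    funext k
    rcases k with (k | k) | k <;> simp [padSl]
  map_smul' r v := by
    funext k
    rcases k with (k | k) | k <;> simp [padSl]

lemma pairing_eqGrad_dispatchOfAngle (hx : Rmat C B SG SB *ᵥ x = padSlLin SG SB (-v))
    (i : Unit ⊕ Fin (NG + NL)) :
    pairing (eqGrad C B i) (dispatchOfAngle C B x) = demandRhs NG v i := by
  rcases i with u | i
  · have hrow : (Rmat C B SG SB *ᵥ x) (Sum.inr u) = 0 := congrFun hx (Sum.inr u)
    change 0 ⬝ᵥ _ + (Rmat C B SG SB *ᵥ x) (Sum.inr u) = 0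
    rw [zero_dotProduct, zero_add, hrow]
  · rw [dispatchOfAngle_apply, pairing_eqGrad_inr]
    induction i using Fin.addCases with
    | left i => simp [demandRhs]
    | right k =>
      have hrow : ((C * B * Cᵀ) *ᵥ x) (Fin.natAdd NG k) = -v k :=
        congrFun hx (Sum.inl (Sum.inl k))
      simpa [demandRhs] using hrow

lemma pairing_ineqGrad_dispatchOfAngle (hx : Rmat C B SG SB *ᵥ x = padSlLin SG SB v)
    {c : Fin NG ⊕ Fin NG ⊕ Fin E ⊕ Fin E} (hc : limitedElement c ∈ SG.disjSum SB) :
    pairing (ineqGrad C B c) (dispatchOfAngle C B x) = 0 := by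
  have hgen : ∀ i ∈ SG, ((C * B * Cᵀ) *ᵥ x) (Fin.castAdd NL i) = 0 := fun i hi =>
    congrFun hx (Sum.inl (Sum.inr (Sum.inl ⟨i, hi⟩)))
  have hflow : ∀ e ∈ SB, ((B * Cᵀ) *ᵥ x) e = 0 := fun e he =>
    congrFun hx (Sum.inl (Sum.inr (Sum.inr ⟨e, he⟩)))
  rw [dispatchOfAngle_apply, pairing_ineqGrad]
  rcases c with i | i | e | e <;> simp only [limitedElement, Sum.elim_inl, Sum.elim_inr,
    Finset.inl_mem_disjSum, Finset.inr_mem_disjSum] at hc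
  · exact hgen i hc
  · exact neg_eq_zero.2 (hgen i hc)
  · exact hflow e hc
  · exact neg_eq_zero.2 (hflow e hc)

lemma span_range_fullGrad_eq_top (hcard : NG ≤ (BindingIdx C B ξ sg θ).ncard + 1)
    (hindep : LinearIndependent ℝ (fullGrad C B ξ sg θ)) :
    Submodule.span ℝ (Set.range (fullGrad C B ξ sg θ)) = ⊤ := by
  have : Fintype (BindingIdx C B ξ sg θ) := Fintype.ofFinite _
  have hle := hindep.fintype_card_le_finrank
  refine hindep.span_eq_top_of_card_eq_finrank' (hle.antisymm ?_)
  rw [← Nat.card_coe_set_eq, Nat.card_eq_fintype_card] at hcard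
  simp only [Module.finrank_prod, Module.finrank_fintype_fun_eq_card, Fintype.card_sum,
    Fintype.card_unit, Fintype.card_fin]
  omega

lemma Rmat_mulVec_eq_zero_iff (hcard : NG ≤ SG.card + SB.card + 1)
    (hS : limitedElement '' BindingIdx C B ξ sg θ = ↑(SG.disjSum SB))
    (hindep : LinearIndependent ℝ (fullGrad C B ξ sg θ)) :
    Rmat C B SG SB *ᵥ x = 0 ↔ x = 0 := by
  refine ⟨fun hx => ?_, fun hx => by rw [hx, mulVec_zero]⟩
  have hbinding : SG.card + SB.card ≤ (BindingIdx C B ξ sg θ).ncard := by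
    rw [← Finset.card_disjSum, ← Set.ncard_coe_finset, ← hS]
    exact Set.ncard_image_le
  have hspan := span_range_fullGrad_eq_top (by omega) hindep
  suffices hz : dispatchOfAngle C B x = 0 from congrArg Prod.snd hz
  refine eq_zero_of_forall_pairing_eq_zero hspan ?_
  rintro (i | ⟨c, hc⟩)
  · have hrhs : demandRhs (NL := NL) NG 0 = 0 := by
      rw [← sub_self (0 : Fin NL → ℝ), demandRhs_sub, sub_self]
    have hbalance := pairing_eqGrad_dispatchOfAngle (v := 0) (by rw [hx, neg_zero, map_zero]) i
    exact hbalance.trans (congrFun hrhs i)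
  · refine pairing_ineqGrad_dispatchOfAngle (v := 0) (by rw [hx, map_zero]) ?_
    exact Finset.mem_coe.1 (hS ▸ Set.mem_image_of_mem _ hc)

theorem Rmat_mulVec_bijective (hcard : SG.card + SB.card + 1 = NG)
    (hS : limitedElement '' BindingIdx C B ξ sg θ = ↑(SG.disjSum SB))
    (hindep : LinearIndependent ℝ (fullGrad C B ξ sg θ)) :
    Function.Bijective (Rmat C B SG SB).mulVec := by
  have hinj : Function.Injective (Rmat C B SG SB).mulVecLin :=
    (injective_iff_map_eq_zero _).2 fun _ => (Rmat_mulVec_eq_zero_iff hcard.ge hS hindep).1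
  have hdim : Module.finrank ℝ (Fin (NG + NL) → ℝ) =
      Module.finrank ℝ ((Fin NL ⊕ (↥SG ⊕ ↥SB)) ⊕ Unit → ℝ) := by
    simp only [Module.finrank_fintype_fun_eq_card, Fintype.card_sum, Fintype.card_fin,
      Fintype.card_unit, Fintype.card_coe]
    omega
  exact ⟨hinj, (LinearMap.injective_iff_surjective_of_finrank_eq_finrank hdim).1 hinj⟩

/-- The change `-(R(S_G, S_B)ᵀ)⁻¹ Π v` of the angles in response to a change `v` of the load. -/
def angleResponse (hR : Function.Bijective (Rmat C B SG SB).mulVec) :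
    (Fin NL → ℝ) →ₗ[ℝ] (Fin (NG + NL) → ℝ) :=
  -((LinearEquiv.ofBijective (Rmat C B SG SB).mulVecLin hR).symm.toLinearMap ∘ₗ padSlLin SG SB)

lemma Rmat_mulVec_angleResponse (hR : Function.Bijective (Rmat C B SG SB).mulVec)
    (v : Fin NL → ℝ) : Rmat C B SG SB *ᵥ angleResponse hR v = padSlLin SG SB (-v) := by
  have hinv := LinearEquiv.apply_symm_apply
    (LinearEquiv.ofBijective (Rmat C B SG SB).mulVecLin hR) (padSlLin SG SB v)
  rw [map_neg, ← hinv]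
  exact mulVec_neg _ _

/-- The change of the dispatch `(s^g, θ)` in response to a change of the load that keeps the
generations in `S_G` and the flows in `S_B`. -/
def dispatchResponse (hR : Function.Bijective (Rmat C B SG SB).mulVec) :
    (Fin NL → ℝ) →ₗ[ℝ] (Fin NG → ℝ) × (Fin (NG + NL) → ℝ) :=
  dispatchOfAngle C B ∘ₗ angleResponse hR

lemma dispatchResponse_fst (hR : Function.Bijective (Rmat C B SG SB).mulVec) (v : Fin NL → ℝ) :
    (dispatchResponse hR v).1 = JFun C B SG SB v := by
  have hinv : Function.invFun (Rmat C B SG SB).mulVec (padSl SG SB v) = -angleResponse hR v := by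
    have hRv : Rmat C B SG SB *ᵥ (-angleResponse hR v) = padSl SG SB v := by
      rw [mulVec_neg, Rmat_mulVec_angleResponse, map_neg, neg_neg]
      rfl
    rw [← hRv]
    exact Function.leftInverse_invFun hR.1 _
  funext i
  rw [JFun, hinv, mulVec_neg, Pi.neg_apply, neg_neg]
  rfl

theorem eventually_isUniqueMinOn_add_dispatchResponse {z₀ : (Fin NG → ℝ) × (Fin (NG + NL) → ℝ)}
    (hmin : IsUniqueMinOn (pairing (f, 0)) (opfFeasibleSet C B ξ sl₀) z₀)
    (hS : limitedElement '' BindingIdx C B ξ z₀.1 z₀.2 = ↑(SG.disjSum SB))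
    (hR : Function.Bijective (Rmat C B SG SB).mulVec) :
    ∀ᶠ sl in 𝓝 sl₀,
      activeSet (fun c => pairing (ineqGrad C B c)) (limitRhs ξ)
          (z₀ + dispatchResponse hR (sl - sl₀)) =
        activeSet (fun c => pairing (ineqGrad C B c)) (limitRhs ξ) z₀ ∧
      IsUniqueMinOn (pairing (f, 0)) (opfFeasibleSet C B ξ sl)
        (z₀ + dispatchResponse hR (sl - sl₀)) := by
  have hz₀ : z₀ + dispatchResponse hR (sl₀ - sl₀) = z₀ := by simp
  have hmin' : IsUniqueMinOn (pairing (f, 0)) (opfFeasibleSet C B ξ sl₀)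
      (z₀ + dispatchResponse hR (sl₀ - sl₀)) := by rwa [hz₀]
  have hcont := hmin'.eventually_of_activeSet_preserved (b := demandRhs NG)
    (x := fun sl => z₀ + dispatchResponse hR (sl - sl₀)) ?_ ?_ ?_
  · rwa [hz₀] at hcont
  · intro sl i
    have hdir := pairing_eqGrad_dispatchOfAngle (Rmat_mulVec_angleResponse hR (sl - sl₀)) i
    rw [map_add, hmin.1.1 i]
    exact (congrArg _ hdir).trans (by simp [demandRhs_sub])
  · intro c
    have hlin : Continuous (pairing (ineqGrad C B c) ∘ₗ dispatchResponse hR) :=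
      LinearMap.continuous_of_finiteDimensional _
    simp only [map_add]
    exact (continuous_const.add (hlin.comp (continuous_id.sub continuous_const))).continuousAt
  · intro c hc sl
    simp only [hz₀] at hc
    have hmem : limitedElement c ∈ SG.disjSum SB := by
      rw [← Finset.mem_coe, ← hS]
      exact Set.mem_image_of_mem _ (bindingIdx_eq_activeSet.symm ▸ hc)
    have hdir := pairing_ineqGrad_dispatchOfAngle
      (Rmat_mulVec_angleResponse hR (sl - sl₀)) hmem
    rw [map_add]
    exact (congrArg _ hdir).trans ((add_zero _).trans hc)

end OptimalPowerFlow

theorem jacobian_formula_general {NG NL E : ℕ}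
    {C : Matrix (Fin (NG + NL)) (Fin E) ℝ} {B : Matrix (Fin E) (Fin E) ℝ}
    {f : Fin NG → ℝ} {ξ : XiT NG E} {sl₀ : Fin NL → ℝ} (hpos : ∀ j, 0 < sl₀ j)
    {sg₀ : Fin NG → ℝ} {θ₀ : Fin (NG + NL) → ℝ}
    (hopt : IsOptimal C B f ξ sl₀ sg₀ θ₀)
    (huniq : ∀ sg θ, IsOptimal C B f ξ sl₀ sg θ → sg = sg₀ ∧ θ = θ₀)
    {SG : Finset (Fin NG)} {SB : Finset (Fin E)}
    (hSG : ∀ i : Fin NG, i ∈ SG ↔ (sg₀ i = ξ.1 i ∨ sg₀ i = ξ.2.1 i))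
    (hSB : ∀ e : Fin E, e ∈ SB ↔
      (((B * Cᵀ) *ᵥ θ₀) e = ξ.2.2.1 e ∨ ((B * Cᵀ) *ᵥ θ₀) e = ξ.2.2.2 e))
    (hcard : SG.card + SB.card + 1 = NG)
    (hindep : LinearIndependent ℝ (fullGrad C B ξ sg₀ θ₀)) :
    Function.Bijective (Rmat C B SG SB).mulVec ∧
    ∃ U : Set (Fin NL → ℝ), IsOpen U ∧ sl₀ ∈ U ∧ U ⊆ OmegaSl C B ξ ∧
      (∀ sl ∈ U, ∀ sg θ, IsOptimal C B f ξ sl sg θ →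
        BindingIdx C B ξ sg θ = BindingIdx C B ξ sg₀ θ₀) ∧
      (∀ sl ∈ U, OPFmap C B f ξ sl = OPFmap C B f ξ sl₀ + JFun C B SG SB (sl - sl₀)) ∧
      ∃ J : (Fin NL → ℝ) →L[ℝ] (Fin NG → ℝ),
        (∀ v, J v = JFun C B SG SB v) ∧ HasFDerivAt (OPFmap C B f ξ) J sl₀ := by
  have hS := image_limitedElement_bindingIdx hSG hSB
  have hR := Rmat_mulVec_bijective hcard hS hindep
  have hmin := isUniqueMinOn_opfFeasibleSet.2 ⟨hopt, huniq⟩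
  have hpos_near : ∀ᶠ sl in nhds sl₀, ∀ j, 0 < sl j :=
    Filter.eventually_all.2 fun j => (continuous_apply j).continuousAt.eventually_const_lt (hpos j)
  obtain ⟨U, hU, hUopen, hsl₀⟩ := eventually_nhds_iff.1
    (hpos_near.and (eventually_isUniqueMinOn_add_dispatchResponse hmin hS hR))
  have haffine : ∀ sl ∈ U, OPFmap C B f ξ sl = OPFmap C B f ξ sl₀ + JFun C B SG SB (sl - sl₀) :=
    fun sl hsl => by
      rw [OPFmap_eq_of_isUniqueMinOn hmin, OPFmap_eq_of_isUniqueMinOn (hU sl hsl).2.2,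
        dispatchResponse_fst]
  refine ⟨hR, U, hUopen, hsl₀, fun sl hsl => ?_, fun sl hsl sg θ hsg => ?_, haffine,
    (LinearMap.fst ℝ _ _ ∘ₗ dispatchResponse hR).toContinuousLinearMap, dispatchResponse_fst hR, ?_⟩
  · exact ⟨(hU sl hsl).1, _, _, mem_opfFeasibleSet.1 (hU sl hsl).2.2.1⟩
  · obtain ⟨rfl, rfl⟩ := (isUniqueMinOn_opfFeasibleSet.1 (hU sl hsl).2.2).2 sg θ hsg
    rw [bindingIdx_eq_activeSet, bindingIdx_eq_activeSet]
    exact (hU sl hsl).2.1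
  · refine hasFDerivAt_of_eventuallyEq_affine (y₀ := OPFmap C B f ξ sl₀) ?_
    filter_upwards [hUopen.mem_nhds hsl₀] with sl hsl
    exact (haffine sl hsl).trans (congrArg _ (dispatchResponse_fst hR _).symm)

theorem jacobian_formula {NG NL E : ℕ} (hNG : 0 < NG) (hNL : 0 < NL) (hE : 0 < E)
    (C : Matrix (Fin (NG + NL)) (Fin E) ℝ) (B : Matrix (Fin E) (Fin E) ℝ)
    (hInc : IsIncidence C) (hConn : ConnectedIncidence C) (hB : PosDiag B)
    (f : Fin NG → ℝ) (hf : f ∈ OmegaF C B)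
    (ξ : XiT NG E) (hξ : ξ ∈ OmegaXi C B)
    (sl₀ : Fin NL → ℝ) (hsl : sl₀ ∈ OmegaSl C B ξ)
    (sg₀ : Fin NG → ℝ) (θ₀ : Fin (NG + NL) → ℝ)
    (hopt : IsOptimal C B f ξ sl₀ sg₀ θ₀)
    (huniq : ∀ sg θ, IsOptimal C B f ξ sl₀ sg θ → sg = sg₀ ∧ θ = θ₀)
    (SG : Finset (Fin NG)) (SB : Finset (Fin E))
    (hSG : ∀ i : Fin NG, i ∈ SG ↔ (sg₀ i = ξ.1 i ∨ sg₀ i = ξ.2.1 i))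
    (hSB : ∀ e : Fin E, e ∈ SB ↔
      (((B * Cᵀ) *ᵥ θ₀) e = ξ.2.2.1 e ∨ ((B * Cᵀ) *ᵥ θ₀) e = ξ.2.2.2 e))
    (hcard : SG.card + SB.card = NG - 1)
    (hbind : bindingCount C B ξ sg₀ θ₀ = NG - 1)
    (hindep : LinearIndependent ℝ (fullGrad C B ξ sg₀ θ₀)) :
    Function.Bijective (Rmat C B SG SB).mulVec ∧
    ∃ U : Set (Fin NL → ℝ), IsOpen U ∧ sl₀ ∈ U ∧ U ⊆ OmegaSl C B ξ ∧
      (∀ sl ∈ U, ∀ sg θ, IsOptimal C B f ξ sl sg θ →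
        BindingIdx C B ξ sg θ = BindingIdx C B ξ sg₀ θ₀) ∧
      (∀ sl ∈ U, OPFmap C B f ξ sl = OPFmap C B f ξ sl₀ + JFun C B SG SB (sl - sl₀)) ∧
      ∃ J : (Fin NL → ℝ) →L[ℝ] (Fin NG → ℝ),
        (∀ v, J v = JFun C B SG SB v) ∧ HasFDerivAt (OPFmap C B f ξ) J sl₀ := by
  exact jacobian_formula_general hsl.1 hopt huniq hSG hSB (by omega) hindep

end
end

section
/- Define ~Ω as the set of triples (f, ξ, s^l) with f ∈ Ω_f, ξ ∈ Ω_ξ and s^l ∈ Ω_sl(ξ) such that at the unique optimal solution of the DC-OPF exactly N_G − 1 inequality constraints are binding and the gradients of these binding inequalities together with the gradients of the N+1 equality constraints are linearly independent in ℝ^{N_G+N}. Then the following two sets of N_G×N_L real matrices are equal: (A) the set of all matrices J for which there exist (f, ξ, s^l) ∈ ~Ω and an open set U with s^l ∈ U ⊆ Ω_sl(ξ) such that the OPF map restricted to U is Fréchet differentiable at s^l with derivative J; and (B) the set of all matrices J(S_G,S_B), where S_G ⊆ {1,…,N_G}, S_B ⊆ {1,…,E}, |S_G| + |S_B| = N_G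 − 1, and S_G ⊥ S_B (for all such (S_G,S_B) the matrix R(S_G,S_B)ᵀ is invertible, so J(S_G,S_B) is well defined). -/
open Matrix

noncomputable section

/-!
The bus angles determine the generations, so the DC-OPF is a linear program in the angles: equality
constraints (load balance and reference angle) together with two-sided bounds on the generations and
branch flows. Let `S = S_G ∪ S_B` be the set of bounded quantities that sit at a limit at an
optimum. Optimality depends only on the cone of feasible directions, so if the equality constraints
and the rows in `S` determine the angles uniquely, then moving the angles so that these rows stay
fixed keeps them optimal as the load varies slightly. The OPF map is therefore locally affine, with
slope `J(S_G, S_B)`, and each derivative in (A) has this form.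

Conversely, choose a cost that on the balanced directions is a combination only of families of rows
that determine the angles; this gives unique optima and forces `N_G - 1` nonzero multipliers. Start
from an operating point in which the generators share a unit load at each load bus, expand the cost
in the rows of `S`, and place the limit of each row of `S` at its present value: a lower or an upper
one according to the sign of its coefficient. The operating point is then optimal, with binding set
exactly `S`.
-/

open Filter Topology

section BoxProgram

variable {V W κ : Type*} [AddCommGroup V] [Module ℝ V] [AddCommGroup W] [Module ℝ W]
variable (K : V →ₗ[ℝ] W) (A : V →ₗ[ℝ] κ → ℝ) (c : V →ₗ[ℝ] ℝ) {l u : κ → ℝ} {b : W} {x y v : V}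

/-- The feasible set of the linear program with equality constraints `K x = b` and box
constraints `l ≤ A x ≤ u`. -/
def boxFeasible (l u : κ → ℝ) (b : W) : Set V :=
  {x | K x = b ∧ A x ∈ Set.Icc l u}

/-- Optimality of `x` for minimizing the linear cost `c` over `boxFeasible K A l u b`. -/
def IsBoxOptimal (l u : κ → ℝ) (b : W) (x : V) : Prop :=
  x ∈ boxFeasible K A l u b ∧ IsMinOn c (boxFeasible K A l u b) x

/-- The feasible directions at `x`: those that preserve the equality constraints and do not
violate to first order any box constraint active at `x`. -/
def feasibleDirections (l u : κ → ℝ) (x : V) : Set V :=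
  {v | K v = 0 ∧ ∀ k, (A x k = l k → 0 ≤ A v k) ∧ (A x k = u k → A v k ≤ 0)}

/-- The equality map joined with the box rows in `S`. -/
def activeMap (S : Finset κ) : V →ₗ[ℝ] W × (S → ℝ) :=
  K.prod ((LinearMap.funLeft ℝ ℝ ((↑) : S → κ)).comp A)

/-- Dual nondegeneracy of the cost: on `ker K` it is a combination of the box rows in `S` only if
these rows already determine the point. -/
def IsGenericCost : Prop :=
  ∀ S : Finset κ, LinearMap.ker (activeMap K A S) ≤ LinearMap.ker c →
    LinearMap.ker (activeMap K A S) = ⊥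

variable {K A c}

lemma mem_ker_activeMap {S : Finset κ} :
    v ∈ LinearMap.ker (activeMap K A S) ↔ K v = 0 ∧ ∀ k ∈ S, A v k = 0 := by
  simp [activeMap, funext_iff, LinearMap.funLeft_apply]

lemma sub_mem_feasibleDirections (hx : x ∈ boxFeasible K A l u b)
    (hy : y ∈ boxFeasible K A l u b) : y - x ∈ feasibleDirections K A l u x := by
  refine ⟨by rw [map_sub, hx.1, hy.1, sub_self], fun k => ⟨fun hk => ?_, fun hk => ?_⟩⟩
  · simpa [hk] using hy.2.1 k
  · simpa [hk] using hy.2.2 k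

lemma eventually_add_mul_le {a d e : ℝ} (hae : a ≤ e) (hd : a = e → d ≤ 0) :
    ∀ᶠ t in 𝓝[>] (0 : ℝ), a + t * d ≤ e := by
  rcases hae.eq_or_lt with heq | hlt
  · filter_upwards [self_mem_nhdsWithin] with t ht
    linarith [mul_nonpos_of_nonneg_of_nonpos (le_of_lt ht) (hd heq)]
  · have hcont : ContinuousAt (fun t : ℝ => a + t * d) 0 := by fun_prop
    have hlt0 : a + 0 * d < e := by simpa using hlt
    exact nhdsWithin_le_nhds ((hcont.eventually_lt_const hlt0).mono fun t ht => ht.le)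

lemma exists_pos_add_smul_mem_boxFeasible [Finite κ] (hx : x ∈ boxFeasible K A l u b)
    (hv : v ∈ feasibleDirections K A l u x) :
    ∃ t : ℝ, 0 < t ∧ x + t • v ∈ boxFeasible K A l u b := by
  have hupper : ∀ᶠ t in 𝓝[>] (0 : ℝ), ∀ k, A x k + t * A v k ≤ u k :=
    Filter.eventually_all.2 fun k => eventually_add_mul_le (hx.2.2 k) (hv.2 k).2
  have hlower : ∀ᶠ t in 𝓝[>] (0 : ℝ), ∀ k, -A x k + t * -A v k ≤ -l k :=
    Filter.eventually_all.2 fun k => eventually_add_mul_le (neg_le_neg (hx.2.1 k))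
      fun h => neg_nonpos.2 ((hv.2 k).1 (neg_injective h))
  obtain ⟨t, hu, hl, ht⟩ := (hupper.and (hlower.and self_mem_nhdsWithin)).exists
  refine ⟨t, ht, by simp [hx.1, hv.1], fun k => ?_, fun k => ?_⟩
  · simpa using by linarith [hl k]
  · simpa using hu k

theorem isBoxOptimal_iff_feasibleDirections [Finite κ] :
    IsBoxOptimal K A c l u b x ↔
      x ∈ boxFeasible K A l u b ∧ ∀ v ∈ feasibleDirections K A l u x, 0 ≤ c v := by
  refine and_congr_right fun hx => ⟨fun hmin v hv => ?_, fun hdir y hy => ?_⟩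
  · obtain ⟨t, ht, hmem⟩ := exists_pos_add_smul_mem_boxFeasible hx hv
    have hle : c x ≤ c (x + t • v) := hmin hmem
    rw [map_add, map_smul, le_add_iff_nonneg_right, smul_eq_mul] at hle
    exact nonneg_of_mul_nonneg_right hle ht
  · simpa using hdir _ (sub_mem_feasibleDirections hx hy)

theorem exists_isBoxOptimal [TopologicalSpace V] [IsTopologicalAddGroup V] [ContinuousSMul ℝ V]
    [T2Space V] [FiniteDimensional ℝ V] [TopologicalSpace W] [IsTopologicalAddGroup W]
    [ContinuousSMul ℝ W] [T2Space W] (hKA : LinearMap.ker (K.prod A) = ⊥)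
    (hne : (boxFeasible K A l u b).Nonempty) : ∃ x, IsBoxOptimal K A c l u b x := by
  have hcompact : IsCompact (K.prod A ⁻¹' ({b} ×ˢ Set.Icc l u)) :=
    (LinearMap.isClosedEmbedding_of_injective hKA).isCompact_preimage
      (isCompact_singleton.prod isCompact_Icc)
  exact hcompact.exists_isMinOn hne c.continuous_of_finiteDimensional.continuousOn

lemma convex_boxFeasible : Convex ℝ (boxFeasible K A l u b) :=
  ((convex_singleton b).linear_preimage K).inter ((convex_Icc l u).linear_preimage A)

lemma IsBoxOptimal.midpoint (hx : IsBoxOptimal K A c l u b x) (hy : IsBoxOptimal K A c l u b y) :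
    IsBoxOptimal K A c l u b (midpoint ℝ x y) := by
  refine ⟨convex_boxFeasible.midpoint_mem hx.1 hy.1, fun z hz => ?_⟩
  have hxz : c x ≤ c z := hx.2 hz
  have hyz : c y ≤ c z := hy.2 hz
  change c (_root_.midpoint ℝ x y) ≤ c z
  rw [midpoint_eq_smul_add, map_smul, map_add, smul_eq_mul, invOf_eq_inv]
  linarith

lemma exists_eq_sum_of_ker_activeMap_le {S : Finset κ}
    (h : LinearMap.ker (activeMap K A S) ≤ LinearMap.ker c) :
    ∃ μ : κ → ℝ, ∀ v, K v = 0 → c v = ∑ k ∈ S, μ k * A v k := by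
  let row (k : κ) : Module.Dual ℝ (LinearMap.ker K) :=
    ((LinearMap.proj k).comp A).domRestrict (LinearMap.ker K)
  have hspan : c.domRestrict (LinearMap.ker K) ∈
      Submodule.span ℝ (row '' S) := by
    rw [Set.image_eq_range]
    refine mem_span_of_iInf_ker_le_ker fun v hv => h (mem_ker_activeMap.2 ⟨v.2, fun k hk => ?_⟩)
    exact (Submodule.mem_iInf _).1 hv ⟨k, hk⟩
  obtain ⟨μ, hμ⟩ := Submodule.mem_span_image_finset_iff_exists_fun' ℝ |>.1 hspan
  refine ⟨μ, fun v hv => ?_⟩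
  simpa [row] using (LinearMap.congr_fun hμ ⟨v, hv⟩).symm

lemma IsGenericCost.congr {c' : V →ₗ[ℝ] ℝ} (hc : IsGenericCost K A c)
    (h : ∀ v, K v = 0 → c' v = c v) : IsGenericCost K A c' :=
  fun S hS => hc S fun v hv => (h v (mem_ker_activeMap.1 hv).1).symm.trans (hS hv)

theorem exists_isGenericCost [Finite κ] {P : Type*} [AddCommGroup P] [Module ℝ P]
    (cost : P →ₗ[ℝ] V →ₗ[ℝ] ℝ) (hcost : ∀ v, K v = 0 → v ≠ 0 → ∃ p, cost p v ≠ 0) :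
    ∃ p, IsGenericCost K A (cost p) := by
  have hwit (S : {S : Finset κ // LinearMap.ker (activeMap K A S) ≠ ⊥}) :
      ∃ v ∈ LinearMap.ker (activeMap K A S), v ≠ 0 := (Submodule.ne_bot_iff _).1 S.2
  choose v hv hv0 using hwit
  obtain ⟨p, hp⟩ := Module.Dual.exists_forall_ne_zero_of_forall_exists (fun S => cost.flip (v S))
    fun S => hcost (v S) (mem_ker_activeMap.1 (hv S)).1 (hv0 S)
  refine ⟨p, fun S hS => ?_⟩
  by_contra hne
  exact hp ⟨S, hne⟩ (hS (hv ⟨S, hne⟩))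

/-- The displacement that meets a perturbation of the right-hand side of the equality constraints
while keeping the box rows in `S` fixed. -/
def response {S : Finset κ} (hS : Function.Bijective (activeMap K A S)) : W →ₗ[ℝ] V :=
  (LinearEquiv.ofBijective (activeMap K A S) hS).symm.toLinearMap.comp (LinearMap.inl ℝ W (S → ℝ))

lemma activeMap_eq_iff {S : Finset κ} (hS : Function.Bijective (activeMap K A S)) {w : W} :
    activeMap K A S v = (w, 0) ↔ v = response hS w :=
  (LinearEquiv.eq_symm_apply (LinearEquiv.ofBijective (activeMap K A S) hS)).symm

lemma map_response {S : Finset κ} (hS : Function.Bijective (activeMap K A S)) (w : W) :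
    K (response hS w) = w :=
  congrArg Prod.fst ((activeMap_eq_iff hS).2 rfl)

lemma rows_response {S : Finset κ} (hS : Function.Bijective (activeMap K A S)) (w : W) {k : κ}
    (hk : k ∈ S) : A (response hS w) k = 0 :=
  congrFun (congrArg Prod.snd ((activeMap_eq_iff hS).2 rfl)) ⟨k, hk⟩

lemma tendsto_rows_add_response [TopologicalSpace W] [IsTopologicalAddGroup W] [ContinuousSMul ℝ W]
    [T2Space W] [FiniteDimensional ℝ W] {S : Finset κ}
    (hS : Function.Bijective (activeMap K A S)) (k : κ) :
    Tendsto (fun b' => A (x + response hS (b' - b)) k) (𝓝 b) (𝓝 (A x k)) := by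
  have hcont : Continuous ((LinearMap.proj k).comp (A.comp (response hS))) :=
    LinearMap.continuous_of_finiteDimensional _
  have hcont' : Continuous fun b' => A x k + A (response hS (b' - b)) k :=
    continuous_const.add (hcont.comp (continuous_sub_right b))
  simpa only [map_add, Pi.add_apply, sub_self, map_zero, Pi.zero_apply, add_zero]
    using hcont'.tendsto b

section ActiveRows

variable [Fintype κ]

open Classical in
/-- The box rows in which the lower or the upper bound holds with equality at `x`. -/
def activeRows (A : V →ₗ[ℝ] κ → ℝ) (l u : κ → ℝ) (x : V) : Finset κ :=
  {k | A x k = l k ∨ A x k = u k}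

lemma mem_activeRows {k : κ} : k ∈ activeRows A l u x ↔ A x k = l k ∨ A x k = u k := by
  simp [activeRows]

lemma ker_activeMap_subset_feasibleDirections :
    (LinearMap.ker (activeMap K A (activeRows A l u x)) : Set V) ⊆
      feasibleDirections K A l u x := by
  intro v hv
  obtain ⟨hK, hA⟩ := mem_ker_activeMap.1 hv
  exact ⟨hK, fun k => ⟨fun hk => (hA k (mem_activeRows.2 (.inl hk))).ge,
    fun hk => (hA k (mem_activeRows.2 (.inr hk))).le⟩⟩

lemma IsBoxOptimal.ker_activeMap_eq_bot (hc : IsGenericCost K A c)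
    (hx : IsBoxOptimal K A c l u b x) :
    LinearMap.ker (activeMap K A (activeRows A l u x)) = ⊥ := by
  refine hc _ fun v hv => LinearMap.mem_ker.2 (le_antisymm ?_ ?_)
  · have := (isBoxOptimal_iff_feasibleDirections.1 hx).2 (-v)
      (ker_activeMap_subset_feasibleDirections (neg_mem hv))
    rwa [map_neg, neg_nonneg] at this
  · exact (isBoxOptimal_iff_feasibleDirections.1 hx).2 v
      (ker_activeMap_subset_feasibleDirections hv)

lemma sub_mem_ker_activeMap_midpoint (hx : x ∈ boxFeasible K A l u b)
    (hy : y ∈ boxFeasible K A l u b) :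
    y - x ∈ LinearMap.ker (activeMap K A (activeRows A l u (midpoint ℝ x y))) := by
  refine mem_ker_activeMap.2 ⟨by rw [map_sub, hx.1, hy.1, sub_self], fun k hk => ?_⟩
  have hmid : A (midpoint ℝ x y) k = (A x k + A y k) / 2 := by
    rw [midpoint_eq_smul_add, map_smul, map_add, invOf_eq_inv, Pi.smul_apply, Pi.add_apply,
      smul_eq_mul, inv_mul_eq_div]
  rw [map_sub, Pi.sub_apply]
  rcases mem_activeRows.1 hk with h | h
  · linarith [hx.2.1 k, hy.2.1 k]
  · linarith [hx.2.2 k, hy.2.2 k]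

theorem IsGenericCost.finrank_le [FiniteDimensional ℝ W]
    (hc : IsGenericCost K A c) {μ : κ → ℝ} (hμ : ∀ v, K v = 0 → c v = μ ⬝ᵥ A v) :
    Module.finrank ℝ V ≤ Module.finrank ℝ W + (Function.support μ).ncard := by
  classical
  have hker : LinearMap.ker (activeMap K A (Function.support μ).toFinset) = ⊥ := by
    refine hc _ fun v hv => ?_
    obtain ⟨hK, hA⟩ := mem_ker_activeMap.1 hv
    rw [LinearMap.mem_ker, hμ v hK]
    refine Finset.sum_eq_zero fun k _ => ?_
    by_cases hk : μ k = 0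
    · rw [hk, zero_mul]
    · rw [hA k (by simpa using hk), mul_zero]
  have hle := LinearMap.finrank_le_finrank_of_injective (LinearMap.ker_eq_bot.1 hker)
  rwa [Module.finrank_prod, Module.finrank_fintype_fun_eq_card, Fintype.card_coe,
    ← Set.ncard_eq_toFinset_card'] at hle

lemma feasibleDirections_subset (h : ∀ k ∈ activeRows A l u x, A y k = A x k) :
    feasibleDirections K A l u y ⊆ feasibleDirections K A l u x := by
  intro v hv
  exact ⟨hv.1, fun k => ⟨fun hk => (hv.2 k).1 (by rw [h k (mem_activeRows.2 (.inl hk)), hk]),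
    fun hk => (hv.2 k).2 (by rw [h k (mem_activeRows.2 (.inr hk)), hk])⟩⟩

theorem exists_box_isBoxOptimal {S : Finset κ}
    (hS : LinearMap.ker (activeMap K A S) ≤ LinearMap.ker c) (x : V) {gap : κ → ℝ}
    (hgap : ∀ k, 0 < gap k) :
    ∃ l u : κ → ℝ, (∀ k, l k < u k) ∧ (∀ k, A x k - gap k ≤ l k) ∧
      activeRows A l u x = S ∧ IsBoxOptimal K A c l u (K x) x := by
  classical
  obtain ⟨μ, hμ⟩ := exists_eq_sum_of_ker_activeMap_le hS
  let l (k : κ) : ℝ := if k ∈ S ∧ 0 ≤ μ k then A x k else A x k - gap k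
  let u (k : κ) : ℝ := if k ∈ S ∧ μ k < 0 then A x k else A x k + gap k
  have hactive : activeRows A l u x = S := by
    ext k
    have := hgap k
    rw [mem_activeRows]
    grind
  refine ⟨l, u, by grind, by grind, hactive, ?_⟩
  refine isBoxOptimal_iff_feasibleDirections.2
    ⟨⟨rfl, fun k => by grind, fun k => by grind⟩, fun v hv => ?_⟩
  rw [hμ v hv.1]
  refine Finset.sum_nonneg fun k hk => ?_
  rcases le_or_gt 0 (μ k) with hpos | hneg
  · exact mul_nonneg hpos ((hv.2 k).1 (by grind))
  · exact mul_nonneg_of_nonpos_of_nonpos hneg.le ((hv.2 k).2 (by grind))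

theorem IsBoxOptimal.eventually_isBoxOptimal [TopologicalSpace W] [IsTopologicalAddGroup W]
    [ContinuousSMul ℝ W] [T2Space W] [FiniteDimensional ℝ W] {S : Finset κ}
    (hS : Function.Bijective (activeMap K A S))
    (hx : IsBoxOptimal K A c l u b x) (hactive : activeRows A l u x ⊆ S) :
    ∀ᶠ b' in 𝓝 b, IsBoxOptimal K A c l u b' (x + response hS (b' - b)) := by
  obtain ⟨⟨hKx, hAx⟩, hdir⟩ := isBoxOptimal_iff_feasibleDirections.1 hx
  have hinactive : ∀ᶠ b' in 𝓝 b, ∀ k, k ∉ S →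
      l k < A (x + response hS (b' - b)) k ∧ A (x + response hS (b' - b)) k < u k := by
    refine Filter.eventually_all.2 fun k => Filter.eventually_imp_distrib_left.2 fun hk => ?_
    obtain ⟨hl, hu⟩ := not_or.1 (mem_activeRows.not.1 (Finset.notMem_mono hactive hk))
    exact ((tendsto_rows_add_response hS k).eventually_const_lt ((hAx.1 k).lt_of_ne' hl)).and
      ((tendsto_rows_add_response hS k).eventually_lt_const ((hAx.2 k).lt_of_ne hu))
  filter_upwards [hinactive] with b' hb'
  have hfixed (k) (hk : k ∈ S) : A (x + response hS (b' - b)) k = A x k := by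
    rw [map_add, Pi.add_apply, rows_response hS _ hk, add_zero]
  refine isBoxOptimal_iff_feasibleDirections.2 ⟨⟨?_, fun k => ?_, fun k => ?_⟩, fun v hv =>
    hdir v (feasibleDirections_subset (fun k hk => hfixed k (hactive hk)) hv)⟩
  · rw [map_add, hKx, map_response, add_sub_cancel]
  · by_cases hk : k ∈ S
    · exact (hfixed k hk).symm ▸ hAx.1 k
    · exact (hb' k hk).1.le
  · by_cases hk : k ∈ S
    · exact (hfixed k hk).symm ▸ hAx.2 k
    · exact (hb' k hk).2.le

end ActiveRows

theorem IsBoxOptimal.eq [Finite κ] (hc : IsGenericCost K A c)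
    (hx : IsBoxOptimal K A c l u b x) (hy : IsBoxOptimal K A c l u b y) : x = y := by
  have := Fintype.ofFinite κ
  have hker := sub_mem_ker_activeMap_midpoint hx.1 hy.1
  rw [(hx.midpoint hy).ker_activeMap_eq_bot hc, Submodule.mem_bot, sub_eq_zero] at hker
  exact hker.symm

end BoxProgram

lemma linearIndependent_iff_of_eq_or_eq_neg {ι ι' R M : Type*} [Ring R] [AddCommGroup M]
    [Module R M] {v : ι → M} {w : ι' → M} (e : ι ≃ ι')
    (h : ∀ i, v i = w (e i) ∨ v i = -w (e i)) :
    LinearIndependent R v ↔ LinearIndependent R w := by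
  have hunit (i) : ∃ ε : Rˣ, ε • w (e i) = v i :=
    (h i).elim (fun hi => ⟨1, by rw [one_smul, hi]⟩)
      fun hi => ⟨-1, by rw [Units.neg_smul, one_smul, hi]⟩
  choose ε hε using hunit
  have hv : v = ε • (w ∘ e) := (funext hε).symm
  rw [hv, LinearIndependent.units_smul_iff, linearIndependent_equiv]

section Network

variable {NG NL E : ℕ} (C : Matrix (Fin (NG + NL)) (Fin E) ℝ) (B : Matrix (Fin E) (Fin E) ℝ)

/-- The angle `θ₁` of the reference bus (`0` if there are no buses), written as the dot product with
`e₁` that occurs in `Mmat`, `eqGrad` and `Rmat`. -/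
def referenceAngle {n : ℕ} : (Fin n → ℝ) →ₗ[ℝ] ℝ :=
  dotProductBilin ℝ ℝ fun j => if (j : ℕ) = 0 then 1 else 0

/-- The power injections at the generator buses as a function of the voltage angles. -/
def generation : (Fin (NG + NL) → ℝ) →ₗ[ℝ] Fin NG → ℝ :=
  (LinearMap.funLeft ℝ ℝ (Fin.castAdd NL)).comp (C * B * Cᵀ).mulVecLin

/-- The power injections at the load buses as a function of the voltage angles. -/
def loadInjection : (Fin (NG + NL) → ℝ) →ₗ[ℝ] Fin NL → ℝ :=
  (LinearMap.funLeft ℝ ℝ (Fin.natAdd NG)).comp (C * B * Cᵀ).mulVecLin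

/-- The equality constraints of the DC-OPF, with the generation eliminated. -/
def balanceMap : (Fin (NG + NL) → ℝ) →ₗ[ℝ] (Fin NL → ℝ) × ℝ :=
  (loadInjection C B).prod referenceAngle

/-- The quantities bounded by the inequality constraints of the DC-OPF: generations and branch
flows. -/
def limitedMap : (Fin (NG + NL) → ℝ) →ₗ[ℝ] Fin NG ⊕ Fin E → ℝ :=
  (LinearEquiv.sumArrowLequivProdArrow _ _ ℝ ℝ).symm.toLinearMap.comp
    ((generation C B).prod (B * Cᵀ).mulVecLin)

/-- The generation cost, linear both in the cost vector and in the voltage angles. -/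
def generationCost : (Fin NG → ℝ) →ₗ[ℝ] (Fin (NG + NL) → ℝ) →ₗ[ℝ] ℝ :=
  (dotProductBilin ℝ ℝ).compl₂ (generation C B)

/-- The lower limits in `ξ`, indexed as `limitedMap`. -/
def lowerLimits (ξ : XiT NG E) : Fin NG ⊕ Fin E → ℝ :=
  Sum.elim ξ.2.1 ξ.2.2.2

/-- The upper limits in `ξ`, indexed as `limitedMap`. -/
def upperLimits (ξ : XiT NG E) : Fin NG ⊕ Fin E → ℝ :=
  Sum.elim ξ.1 ξ.2.2.1

/-- The angle vectors feasible for the DC-OPF, with the generation eliminated. -/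
def feasibleAngles (ξ : XiT NG E) (sl : Fin NL → ℝ) : Set (Fin (NG + NL) → ℝ) :=
  boxFeasible (balanceMap C B) (limitedMap C B) (lowerLimits ξ) (upperLimits ξ) (-sl, 0)

/-- Optimality of an angle vector for the DC-OPF, with the generation eliminated. -/
def IsOptimalAngle (f : Fin NG → ℝ) (ξ : XiT NG E) (sl : Fin NL → ℝ)
    (θ : Fin (NG + NL) → ℝ) : Prop :=
  IsBoxOptimal (balanceMap C B) (limitedMap C B) (generationCost C B f)
    (lowerLimits ξ) (upperLimits ξ) (-sl, 0) θ

variable {C B} {f : Fin NG → ℝ} {ξ : XiT NG E} {sl : Fin NL → ℝ} {sg : Fin NG → ℝ}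
  {θ v : Fin (NG + NL) → ℝ}

lemma referenceAngle_eq_zero_iff {n : ℕ} {v : Fin n → ℝ} :
    referenceAngle v = 0 ↔ ∀ h : 0 < n, v ⟨0, h⟩ = 0 := by
  rcases n.eq_zero_or_pos with rfl | hn
  · exact iff_of_true (by rw [Subsingleton.elim v 0, map_zero]) fun h => absurd h (lt_irrefl 0)
  · have hsum : referenceAngle v = v ⟨0, hn⟩ := by
      simp [referenceAngle, dotProduct, ← Fin.ext_iff (b := ⟨0, hn⟩)]
    simp [hsum, hn]

lemma mulVec_eq_append_iff {w : Fin NL → ℝ} :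
    (C * B * Cᵀ) *ᵥ θ = Fin.append sg w ↔ generation C B θ = sg ∧ loadInjection C B θ = w := by
  refine ⟨fun h => ⟨?_, ?_⟩, fun ⟨hg, hl⟩ => ?_⟩
  · exact funext fun i => (congrFun h _).trans (Fin.append_left sg w i)
  · exact funext fun j => (congrFun h _).trans (Fin.append_right sg w j)
  · rw [← hg, ← hl]
    exact (Fin.append_castAdd_natAdd (f := (C * B * Cᵀ) *ᵥ θ)).symm

lemma feasible_iff :
    Feasible C B ξ sl sg θ ↔ sg = generation C B θ ∧ θ ∈ feasibleAngles C B ξ sl := by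
  constructor
  · rintro ⟨href, hbal, hgen, hflow⟩
    obtain ⟨rfl, hload⟩ := mulVec_eq_append_iff.1 hbal
    exact ⟨rfl, Prod.ext hload (referenceAngle_eq_zero_iff.2 href),
      Sum.rec (fun i => (hgen i).1) fun e => (hflow e).1,
      Sum.rec (fun i => (hgen i).2) fun e => (hflow e).2⟩
  · rintro ⟨rfl, hbal, hlower, hupper⟩
    exact ⟨referenceAngle_eq_zero_iff.1 (congrArg Prod.snd hbal),
      mulVec_eq_append_iff.2 ⟨rfl, congrArg Prod.fst hbal⟩,
      fun i => ⟨hlower (.inl i), hupper (.inl i)⟩, fun e => ⟨hlower (.inr e), hupper (.inr e)⟩⟩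

lemma isOptimal_iff :
    IsOptimal C B f ξ sl sg θ ↔ sg = generation C B θ ∧ IsOptimalAngle C B f ξ sl θ := by
  constructor
  · rintro ⟨hfeas, hmin⟩
    obtain ⟨rfl, hθ⟩ := feasible_iff.1 hfeas
    exact ⟨rfl, hθ, fun θ' hθ' => hmin _ θ' (feasible_iff.2 ⟨rfl, hθ'⟩)⟩
  · rintro ⟨rfl, hθ, hmin⟩
    refine ⟨feasible_iff.2 ⟨rfl, hθ⟩, fun sg' θ' hfeas => ?_⟩
    obtain ⟨rfl, hθ'⟩ := feasible_iff.1 hfeas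
    exact hmin hθ'

lemma mem_OmegaSl_iff :
    sl ∈ OmegaSl C B ξ ↔ (∀ j, 0 < sl j) ∧ (feasibleAngles C B ξ sl).Nonempty := by
  refine and_congr_right fun _ => ⟨fun ⟨sg, θ, h⟩ => ⟨θ, (feasible_iff.1 h).2⟩, fun ⟨θ, h⟩ => ?_⟩
  exact ⟨generation C B θ, θ, feasible_iff.2 ⟨rfl, h⟩⟩

section Laplacian

lemma sum_laplacian (hConn : ConnectedIncidence C) (v : Fin (NG + NL) → ℝ) :
    ∑ i, ((C * B * Cᵀ) *ᵥ v) i = 0 := by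
  have hone : (1 : Fin (NG + NL) → ℝ) ᵥ* C = 0 := by
    rw [← mulVec_transpose]
    exact (hConn 1).2 ⟨1, rfl⟩
  rw [← one_dotProduct, dotProduct_mulVec, ← vecMul_vecMul, ← vecMul_vecMul, hone, zero_vecMul,
    zero_vecMul, zero_dotProduct]

lemma transpose_mulVec_eq_zero_of_posDef {m n : Type*} [Fintype m] [Fintype n]
    {A : Matrix m n ℝ} {D : Matrix n n ℝ} (hD : D.PosDef) {v : m → ℝ}
    (hv : (A * D * Aᵀ) *ᵥ v = 0) : Aᵀ *ᵥ v = 0 := by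
  by_contra hne
  have hpos := hD.dotProduct_mulVec_pos hne
  rw [star_trivial, mulVec_transpose, ← dotProduct_mulVec, ← mulVec_transpose, mulVec_mulVec,
    mulVec_mulVec, hv, dotProduct_zero] at hpos
  exact hpos.false

lemma eq_zero_of_laplacian_eq_zero (hConn : ConnectedIncidence C) (hB : B.PosDef)
    (hv : (C * B * Cᵀ) *ᵥ v = 0) (href : referenceAngle v = 0) : v = 0 := by
  obtain ⟨a, rfl⟩ := (hConn v).1 (transpose_mulVec_eq_zero_of_posDef hB hv)
  exact funext fun i => referenceAngle_eq_zero_iff.1 href i.pos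

lemma eq_zero_of_balanceMap_eq_zero (hConn : ConnectedIncidence C) (hB : B.PosDef)
    (hv : balanceMap C B v = 0) (hgen : generation C B v = 0) : v = 0 := by
  refine eq_zero_of_laplacian_eq_zero hConn hB ?_ (congrArg Prod.snd hv)
  rw [mulVec_eq_append_iff.2 ⟨hgen, congrArg Prod.fst hv⟩]
  exact Fin.append_castAdd_natAdd (f := 0)

lemma sum_generation_add_sum_loadInjection (hConn : ConnectedIncidence C)
    (v : Fin (NG + NL) → ℝ) :
    ∑ i, generation C B v i + ∑ j, loadInjection C B v j = 0 :=
  (Fin.sum_univ_add _).symm.trans (sum_laplacian hConn v)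

lemma exists_laplacian_eq (hConn : ConnectedIncidence C) (hB : B.PosDef) (hN : 0 < NG + NL)
    {y : Fin (NG + NL) → ℝ} (hy : ∑ i, y i = 0) :
    ∃ θ, (C * B * Cᵀ) *ᵥ θ = y ∧ referenceAngle θ = 0 := by
  let T : (Fin (NG + NL) → ℝ) →ₗ[ℝ] Fin (NG + NL) → ℝ :=
    (C * B * Cᵀ).mulVecLin + referenceAngle.smulRight 1
  have hT (θ) : T θ = (C * B * Cᵀ) *ᵥ θ + referenceAngle θ • 1 := rfl
  have href {θ} (hθ : ∑ i, T θ i = 0) : referenceAngle θ = 0 := by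
    simp only [hT, Pi.add_apply, Finset.sum_add_distrib, sum_laplacian hConn, zero_add,
      Pi.smul_apply, Pi.one_apply, smul_eq_mul, mul_one, Finset.sum_const, Finset.card_univ,
      Fintype.card_fin, nsmul_eq_mul] at hθ
    exact (mul_eq_zero.1 hθ).resolve_left (Nat.cast_ne_zero.2 hN.ne')
  have hinj : Function.Injective T := by
    refine (injective_iff_map_eq_zero T).2 fun θ hθ => ?_
    have h0 := href (θ := θ) (by simp [hθ])
    rw [hT, h0, zero_smul, add_zero] at hθ
    exact eq_zero_of_laplacian_eq_zero hConn hB hθ h0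
  obtain ⟨θ, rfl⟩ := LinearMap.injective_iff_surjective.1 hinj y
  have h0 := href hy
  exact ⟨θ, by rw [hT, h0, zero_smul, add_zero], h0⟩

end Laplacian

section WellBehavedCost

lemma ker_prod_limitedMap (hConn : ConnectedIncidence C) (hB : B.PosDef) :
    LinearMap.ker ((balanceMap C B).prod (limitedMap C B)) = ⊥ := by
  refine (LinearMap.ker_eq_bot').2 fun v hv => ?_
  exact eq_zero_of_balanceMap_eq_zero hConn hB (congrArg Prod.fst hv)
    (funext fun i => congrFun (congrArg Prod.snd hv) (.inl i))

lemma generationCost_const (hConn : ConnectedIncidence C) (hv : balanceMap C B v = 0) (a : ℝ) :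
    generationCost C B (fun _ => a) v = 0 := by
  have hload : loadInjection C B v = 0 := congrArg Prod.fst hv
  have hsum : ∑ i, generation C B v i = 0 := by
    simpa [hload] using sum_generation_add_sum_loadInjection (B := B) hConn v
  change ∑ i, a * generation C B v i = 0
  rw [← Finset.mul_sum, hsum, mul_zero]

theorem exists_nonneg_isGenericCost (hConn : ConnectedIncidence C) (hB : B.PosDef) :
    ∃ f : Fin NG → ℝ, 0 ≤ f ∧
      IsGenericCost (balanceMap C B) (limitedMap C B) (generationCost C B f) := by
  obtain ⟨f, hf⟩ := exists_isGenericCost (K := balanceMap C B) (A := limitedMap C B)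
    (generationCost C B) fun v hv hv0 => by
      by_contra! hcost
      exact hv0 (eq_zero_of_balanceMap_eq_zero hConn hB hv
        (dotProduct_self_eq_zero.1 (hcost (generation C B v))))
  -- Under power balance the generations sum to zero, so a uniform cost shift is harmless.
  refine ⟨f + fun _ => ∑ i, |f i|, fun i => ?_, hf.congr fun v hv => ?_⟩
  · have hle := Finset.single_le_sum (fun j _ => abs_nonneg (f j)) (Finset.mem_univ i)
    exact neg_le_iff_add_nonneg.1 ((neg_le_neg hle).trans (neg_abs_le (f i)))
  · rw [map_add, LinearMap.add_apply, generationCost_const hConn hv, add_zero]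

lemma Mmat_transpose_mulVec_dotProduct (τ : Fin (NG + NL + 1) → ℝ) (v : Fin (NG + NL) → ℝ) :
    ((Mmat C B)ᵀ *ᵥ τ) ⬝ᵥ v =
      (Fin.init τ) ⬝ᵥ ((C * B * Cᵀ) *ᵥ v) + τ (Fin.last _) * referenceAngle v := by
  have hM : (Mmat C B) *ᵥ v = Fin.snoc ((C * B * Cᵀ) *ᵥ v) (referenceAngle v) := by
    refine funext (Fin.lastCases ?_ fun i => ?_)
    · simp [Mmat, mulVec, referenceAngle]
    · simp [Mmat, mulVec]
  rw [mulVec_transpose, ← dotProduct_mulVec, hM]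
  simp [dotProduct, Fin.sum_univ_castSucc, Fin.init]

lemma generationCost_eq_of_isKKT (hB : B.PosDef) {τ : Fin (NG + NL + 1) → ℝ}
    {μp μm : Fin E → ℝ} {lp lm : Fin NG → ℝ} (h : IsKKT C B f ξ sl sg θ τ μp μm lp lm)
    (hv : balanceMap C B v = 0) :
    generationCost C B f v = Sum.elim (lm - lp) (μm - μp) ⬝ᵥ limitedMap C B v := by
  obtain ⟨-, hstat, hprice, -⟩ := h
  have hload : loadInjection C B v = 0 := congrArg Prod.fst hv
  have href : referenceAngle v = 0 := congrArg Prod.snd hv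
  have hf : f = Fin.init τ ∘ Fin.castAdd NL + (lm - lp) :=
    funext fun i => by
      have hτ : f i = τ (Fin.castLE (by omega) i) + (lm i - lp i) := by linarith [hprice i]
      exact hτ
  have hnodal : Fin.init τ ⬝ᵥ ((C * B * Cᵀ) *ᵥ v) =
      (Fin.init τ ∘ Fin.castAdd NL) ⬝ᵥ generation C B v := by
    rw [mulVec_eq_append_iff.2 ⟨rfl, hload⟩]
    simp [dotProduct, Fin.sum_univ_add]
  have hflow : ((C * B) *ᵥ (μp - μm)) ⬝ᵥ v = (μp - μm) ⬝ᵥ ((B * Cᵀ) *ᵥ v) := by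
    have hBt : Bᵀ = B := hB.isHermitian
    rw [dotProduct_comm, dotProduct_mulVec, dotProduct_comm, ← mulVec_transpose, transpose_mul, hBt]
  have hdual : (Fin.init τ ∘ Fin.castAdd NL) ⬝ᵥ generation C B v +
      (μp - μm) ⬝ᵥ ((B * Cᵀ) *ᵥ v) = 0 := by
    have hM := Mmat_transpose_mulVec_dotProduct (C := C) (B := B) τ v
    rw [href, mul_zero, add_zero, hnodal] at hM
    rw [← hM, ← hflow, ← add_dotProduct, hstat, zero_dotProduct]
  calc f ⬝ᵥ generation C B v
      = (lm - lp) ⬝ᵥ generation C B v + (μm - μp) ⬝ᵥ ((B * Cᵀ) *ᵥ v) := by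
        rw [hf, add_dotProduct, ← neg_sub μp μm, neg_dotProduct]
        linarith
    _ = _ := (sumElim_dotProduct_sumElim ..).symm

lemma ncard_support_sumElim_sub_le {m n : ℕ} (a b : Fin m → ℝ) (a' b' : Fin n → ℝ) :
    (Function.support (Sum.elim (a - b) (a' - b'))).ncard ≤ nnz a + nnz b + (nnz a' + nnz b') := by
  have hsub {n : ℕ} (a b : Fin n → ℝ) : (Function.support (a - b)).ncard ≤ nnz a + nnz b :=
    (Set.ncard_le_ncard (Function.support_sub a b)).trans (Set.ncard_union_le _ _)
  have hsupp : Function.support (Sum.elim (a - b) (a' - b')) =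
      Sum.inl '' Function.support (a - b) ∪ Sum.inr '' Function.support (a' - b') := by
    ext (i | j) <;> simp
  rw [hsupp]
  exact (Set.ncard_union_le _ _).trans (add_le_add ((Set.ncard_image_le).trans (hsub a b))
    ((Set.ncard_image_le).trans (hsub a' b')))

theorem mem_OmegaF_of_isGenericCost (hConn : ConnectedIncidence C) (hB : B.PosDef)
    (hf : 0 ≤ f) (hgen : IsGenericCost (balanceMap C B) (limitedMap C B) (generationCost C B f)) :
    f ∈ OmegaF C B := by
  refine ⟨hf, fun ξ _ sl hsl => ⟨?_, fun sg θ τ μp μm lp lm hkkt => ?_⟩⟩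
  · obtain ⟨θ, hθ⟩ := exists_isBoxOptimal (c := generationCost C B f)
      (ker_prod_limitedMap hConn hB) (mem_OmegaSl_iff.1 hsl).2
    refine ⟨(generation C B θ, θ), isOptimal_iff.2 ⟨rfl, hθ⟩, fun p hp => ?_⟩
    obtain ⟨hsg, hopt⟩ := isOptimal_iff.1 hp
    have hθ' : p.2 = θ := IsBoxOptimal.eq hgen hopt hθ
    exact Prod.ext (by rw [hsg, hθ']) hθ'
  · have hrank := hgen.finrank_le fun v hv => generationCost_eq_of_isKKT hB hkkt hv
    simp only [Module.finrank_prod, Module.finrank_fin_fun, Module.finrank_self] at hrank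
    have hcard := ncard_support_sumElim_sub_le lm lp μm μp
    omega

end WellBehavedCost

section Jacobian

variable {SG : Finset (Fin NG)} {SB : Finset (Fin E)}

lemma mem_ker_activeMap_disjSum :
    v ∈ LinearMap.ker (activeMap (balanceMap C B) (limitedMap C B) (SG.disjSum SB)) ↔
      balanceMap C B v = 0 ∧ (∀ i ∈ SG, generation C B v i = 0) ∧
        ∀ e ∈ SB, ((B * Cᵀ) *ᵥ v) e = 0 := by
  rw [mem_ker_activeMap, Sum.forall]
  simp only [Finset.inl_mem_disjSum, Finset.inr_mem_disjSum]
  rfl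

/-- The pairing of a constraint gradient with the direction that moves the angles by `v` and the
generations accordingly. -/
def gradientPairing (C : Matrix (Fin (NG + NL)) (Fin E) ℝ) (B : Matrix (Fin E) (Fin E) ℝ)
    (v : Fin (NG + NL) → ℝ) : (Fin NG → ℝ) × (Fin (NG + NL) → ℝ) →ₗ[ℝ] ℝ :=
  ((dotProductBilin ℝ ℝ).flip (generation C B v)).coprod ((dotProductBilin ℝ ℝ).flip v)

lemma gradientPairing_apply (p : (Fin NG → ℝ) × (Fin (NG + NL) → ℝ)) :
    gradientPairing C B v p = p.1 ⬝ᵥ generation C B v + p.2 ⬝ᵥ v :=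
  rfl

lemma gradientPairing_eqGrad (hv : balanceMap C B v = 0) (i : Unit ⊕ Fin (NG + NL)) :
    gradientPairing C B v (eqGrad C B i) = 0 := by
  rw [gradientPairing_apply]
  rcases i with u | i
  · change 0 ⬝ᵥ generation C B v + referenceAngle v = 0
    rw [zero_dotProduct, zero_add]
    exact congrArg Prod.snd hv
  · induction i using Fin.addCases with
    | left i =>
      have hsingle : (eqGrad C B (.inr (Fin.castAdd NL i))).1 = Pi.single i (-1) := by
        ext k
        simp [eqGrad, Pi.single_apply, Fin.ext_iff]
      rw [hsingle, single_dotProduct, neg_one_mul]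
      exact neg_add_cancel (generation C B v i)
    | right j =>
      have hzero : (eqGrad C B (.inr (Fin.natAdd NG j))).1 = 0 := by
        ext k
        simp [eqGrad, (k.isLt.trans_le (Nat.le_add_right NG j)).ne]
      rw [hzero, zero_dotProduct, zero_add]
      exact congrFun (congrArg Prod.fst hv) j

theorem bijective_activeMap_of_perp (hNG : 0 < NG) (hcard : SG.card + SB.card = NG - 1)
    (hperp : Perp C B SG SB) :
    Function.Bijective
      (activeMap (balanceMap C B) (limitedMap C B) (SG.disjSum SB)) := by
  have hspan := hperp.span_eq_top_of_card_eq_finrank' (by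
    simp only [Fintype.card_sum, Fintype.card_unique, Fintype.card_fin, Fintype.card_coe,
      Module.finrank_prod, Module.finrank_fintype_fun_eq_card]
    omega)
  have hinj : LinearMap.ker
      (activeMap (balanceMap C B) (limitedMap C B) (SG.disjSum SB)) = ⊥ := by
    refine (Submodule.eq_bot_iff _).2 fun v hv => ?_
    obtain ⟨hbal, hgen, hflow⟩ := mem_ker_activeMap_disjSum.1 hv
    have hzero : gradientPairing C B v = 0 := by
      refine LinearMap.ext_on_range hspan ?_
      rintro (i | i | e)
      · exact gradientPairing_eqGrad hbal i
      · simp [gradientPairing_apply, hgen i i.2]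
      · change 0 ⬝ᵥ generation C B v + ((B * Cᵀ) *ᵥ v) e = 0
        rw [zero_dotProduct, zero_add, hflow e e.2]
    have hself := LinearMap.congr_fun hzero (0, v)
    simpa [gradientPairing_apply] using hself
  rw [LinearMap.ker_eq_bot] at hinj
  refine ⟨hinj, (LinearMap.injective_iff_surjective_of_finrank_eq_finrank ?_).1 hinj⟩
  simp only [Module.finrank_fintype_fun_eq_card, Fintype.card_fin, Module.finrank_prod,
    Module.finrank_self, Fintype.card_coe, Finset.card_disjSum]
  omega

lemma Rmat_mulVec_eq_padSl_iff {w : Fin NL → ℝ} :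
    Rmat C B SG SB *ᵥ v = padSl SG SB w ↔
      activeMap (balanceMap C B) (limitedMap C B) (SG.disjSum SB) v = ((w, 0), 0) := by
  simp only [funext_iff, Sum.forall, Prod.ext_iff]
  constructor
  · rintro ⟨⟨hload, hgen, hflow⟩, href⟩
    refine ⟨⟨hload, href ()⟩, ?_⟩
    rintro ⟨i | e, hk⟩
    · exact hgen ⟨i, Finset.inl_mem_disjSum.1 hk⟩
    · exact hflow ⟨e, Finset.inr_mem_disjSum.1 hk⟩
  · rintro ⟨⟨hload, href⟩, hrows⟩
    exact ⟨⟨hload, fun i => hrows ⟨.inl i, Finset.inl_mem_disjSum.2 i.2⟩,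
      fun e => hrows ⟨.inr e, Finset.inr_mem_disjSum.2 e.2⟩⟩, fun _ => href⟩

theorem bijective_Rmat_mulVec (hNG : 0 < NG) (hcard : SG.card + SB.card = NG - 1)
    (hbij : Function.Bijective (activeMap (balanceMap C B) (limitedMap C B) (SG.disjSum SB))) :
    Function.Bijective (Rmat C B SG SB).mulVec := by
  have hinj : Function.Injective (Rmat C B SG SB).mulVecLin := by
    refine (injective_iff_map_eq_zero _).2 fun v hv => ?_
    have hpad : padSl SG SB (0 : Fin NL → ℝ) = 0 := by
      ext ((k | i | e) | u) <;> rfl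
    refine (injective_iff_map_eq_zero _).1 hbij.1 v
      ((Rmat_mulVec_eq_padSl_iff (w := 0)).1 ?_)
    rw [hpad, ← hv, mulVecLin_apply]
  refine ⟨hinj, (LinearMap.injective_iff_surjective_of_finrank_eq_finrank ?_).1 hinj⟩
  simp only [Module.finrank_fintype_fun_eq_card, Fintype.card_fin, Fintype.card_sum,
    Fintype.card_coe, Fintype.card_unique]
  omega

lemma JFun_eq (hbij : Function.Bijective
      (activeMap (balanceMap C B) (limitedMap C B) (SG.disjSum SB)))
    (hR : Function.Injective (Rmat C B SG SB).mulVec) (w : Fin NL → ℝ) :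
    JFun C B SG SB w = -generation C B (response hbij (w, 0)) := by
  have hinv : Function.invFun (Rmat C B SG SB).mulVec (padSl SG SB w) = response hbij (w, 0) := by
    rw [← Rmat_mulVec_eq_padSl_iff.2 ((activeMap_eq_iff hbij).2 rfl)]
    exact Function.leftInverse_invFun hR _
  unfold JFun
  rw [hinv]
  rfl

theorem mulVecLin_Jmatrix (hbij : Function.Bijective
      (activeMap (balanceMap C B) (limitedMap C B) (SG.disjSum SB)))
    (hR : Function.Injective (Rmat C B SG SB).mulVec) :
    (Jmatrix C B SG SB).mulVecLin =
      -(generation C B).comp ((response hbij).comp (LinearMap.inl ℝ (Fin NL → ℝ) ℝ)) := by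
  have hmatrix : Jmatrix C B SG SB = LinearMap.toMatrix'
      (-(generation C B).comp ((response hbij).comp (LinearMap.inl ℝ (Fin NL → ℝ) ℝ))) := by
    ext i j
    rw [LinearMap.toMatrix'_apply, Jmatrix, of_apply, JFun_eq hbij hR]
    rfl
  rw [hmatrix, ← toLin'_apply', toLin'_toMatrix']

end Jacobian

section BindingConstraints

variable {SG : Finset (Fin NG)} {SB : Finset (Fin E)}

lemma lowerLimits_lt_upperLimits (hξ : ξ ∈ OmegaXi C B) (k : Fin NG ⊕ Fin E) :
    lowerLimits ξ k < upperLimits ξ k :=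
  Sum.rec hξ.2.1 hξ.2.2.1 k

lemma ncard_eq_add_ncard_eq {κ : Type*} {S : Finset κ} {a l u : κ → ℝ} (hlu : ∀ k, l k < u k)
    (hS : ∀ k, k ∈ S ↔ a k = l k ∨ a k = u k) :
    {k | a k = u k}.ncard + {k | a k = l k}.ncard = S.card := by
  have hunion : (S : Set κ) = {k | a k = u k} ∪ {k | a k = l k} :=
    Set.ext fun k => (hS k).trans or_comm
  have hfin : ({k | a k = u k} ∪ {k | a k = l k}).Finite := hunion ▸ S.finite_toSet
  have hdisj : Disjoint {k | a k = u k} {k | a k = l k} :=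
    Set.disjoint_left.2 fun k hu hl => (hlu k).ne (hl.symm.trans hu)
  rw [← Set.ncard_coe_finset, hunion, Set.ncard_union_eq hdisj
    (hfin.subset Set.subset_union_left) (hfin.subset Set.subset_union_right)]

lemma mem_limitedGenerators_iff
    (hS : activeRows (limitedMap C B) (lowerLimits ξ) (upperLimits ξ) θ = SG.disjSum SB)
    {i : Fin NG} : i ∈ SG ↔ generation C B θ i = ξ.2.1 i ∨ generation C B θ i = ξ.1 i := by
  rw [← Finset.inl_mem_disjSum (t := SB), ← hS, mem_activeRows]
  rfl

lemma mem_limitedBranches_iff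
    (hS : activeRows (limitedMap C B) (lowerLimits ξ) (upperLimits ξ) θ = SG.disjSum SB)
    {e : Fin E} :
    e ∈ SB ↔ ((B * Cᵀ) *ᵥ θ) e = ξ.2.2.2 e ∨ ((B * Cᵀ) *ᵥ θ) e = ξ.2.2.1 e := by
  rw [← Finset.inr_mem_disjSum (s := SG), ← hS, mem_activeRows]
  rfl

theorem bindingCount_eq_card (hlu : ∀ k, lowerLimits ξ k < upperLimits ξ k)
    (hS : activeRows (limitedMap C B) (lowerLimits ξ) (upperLimits ξ) θ = SG.disjSum SB) :
    bindingCount C B ξ (generation C B θ) θ = SG.card + SB.card := by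
  have hgen := ncard_eq_add_ncard_eq (S := SG) (fun i => hlu (.inl i)) fun _ =>
    mem_limitedGenerators_iff hS
  have hflow := ncard_eq_add_ncard_eq (S := SB) (fun e => hlu (.inr e)) fun _ =>
    mem_limitedBranches_iff hS
  rw [← hgen, ← hflow]
  exact add_assoc _ _ _

/-- The element of `S_G` or `S_B` whose limit a binding inequality constraint expresses. -/
def bindingRow
    (hS : activeRows (limitedMap C B) (lowerLimits ξ) (upperLimits ξ) θ = SG.disjSum SB) :
    BindingIdx C B ξ (generation C B θ) θ → SG ⊕ SB
  | ⟨.inl i, h⟩ => .inl ⟨i, (mem_limitedGenerators_iff hS).2 (.inr h)⟩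
  | ⟨.inr (.inl i), h⟩ => .inl ⟨i, (mem_limitedGenerators_iff hS).2 (.inl h)⟩
  | ⟨.inr (.inr (.inl e)), h⟩ => .inr ⟨e, (mem_limitedBranches_iff hS).2 (.inr h)⟩
  | ⟨.inr (.inr (.inr e)), h⟩ => .inr ⟨e, (mem_limitedBranches_iff hS).2 (.inl h)⟩

lemma bijective_bindingRow (hlu : ∀ k, lowerLimits ξ k < upperLimits ξ k)
    (hS : activeRows (limitedMap C B) (lowerLimits ξ) (upperLimits ξ) θ = SG.disjSum SB) :
    Function.Bijective (bindingRow hS) := by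
  have hne {k} (hu : limitedMap C B θ k = upperLimits ξ k)
      (hl : limitedMap C B θ k = lowerLimits ξ k) : False := (hlu k).ne (hl.symm.trans hu)
  constructor
  · rintro ⟨i | i | e | e, h⟩ ⟨i' | i' | e' | e', h'⟩ heq <;>
      simp only [bindingRow, Sum.inl.injEq, Sum.inr.injEq, Subtype.mk.injEq,
        reduceCtorEq] at heq <;>
      subst heq
    · rfl
    · exact (hne (k := .inl i) h h').elim
    · exact (hne (k := .inl i) h' h).elim
    · rfl
    · rfl
    · exact (hne (k := .inr e) h h').elim
    · exact (hne (k := .inr e) h' h).elim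
    · rfl
  · rintro (⟨i, hi⟩ | ⟨e, he⟩)
    · rcases (mem_limitedGenerators_iff hS).1 hi with h | h
      · exact ⟨⟨.inr (.inl i), h⟩, rfl⟩
      · exact ⟨⟨.inl i, h⟩, rfl⟩
    · rcases (mem_limitedBranches_iff hS).1 he with h | h
      · exact ⟨⟨.inr (.inr (.inr e)), h⟩, rfl⟩
      · exact ⟨⟨.inr (.inr (.inl e)), h⟩, rfl⟩

theorem linearIndependent_fullGrad_iff (hlu : ∀ k, lowerLimits ξ k < upperLimits ξ k)
    (hS : activeRows (limitedMap C B) (lowerLimits ξ) (upperLimits ξ) θ = SG.disjSum SB) :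
    LinearIndependent ℝ (fullGrad C B ξ (generation C B θ) θ) ↔ Perp C B SG SB := by
  refine linearIndependent_iff_of_eq_or_eq_neg
    ((Equiv.refl _).sumCongr (Equiv.ofBijective _ (bijective_bindingRow hlu hS))) ?_
  rintro (j | ⟨i | i | e | e, h⟩)
  · exact .inl rfl
  · exact .inl rfl
  · exact .inr (Prod.ext rfl neg_zero.symm)
  · exact .inl rfl
  · exact .inr (Prod.ext neg_zero.symm rfl)

end BindingConstraints

section OperatorDerivative

variable {SG : Finset (Fin NG)} {SB : Finset (Fin E)}

lemma OPFmap_eq (hf : f ∈ OmegaF C B) (hξ : ξ ∈ OmegaXi C B) (hsl : sl ∈ OmegaSl C B ξ)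
    (hθ : IsOptimalAngle C B f ξ sl θ) : OPFmap C B f ξ sl = generation C B θ := by
  have hopt : IsOptimal C B f ξ sl (generation C B θ) θ := isOptimal_iff.2 ⟨rfl, hθ⟩
  have hex : ∃ p : (Fin NG → ℝ) × (Fin (NG + NL) → ℝ), IsOptimal C B f ξ sl p.1 p.2 :=
    ⟨(_, _), hopt⟩
  have huniq := (hf.2 ξ hξ sl hsl).1.unique hex.choose_spec (y₂ := (_, _)) hopt
  rw [OPFmap, dif_pos hex, huniq]

lemma eventually_OPFmap_eq (hf : f ∈ OmegaF C B) (hξ : ξ ∈ OmegaXi C B) (hsl : ∀ j, 0 < sl j)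
    (hθ : IsOptimalAngle C B f ξ sl θ)
    (hbij : Function.Bijective (activeMap (balanceMap C B) (limitedMap C B) (SG.disjSum SB)))
    (hactive : activeRows (limitedMap C B) (lowerLimits ξ) (upperLimits ξ) θ ⊆ SG.disjSum SB) :
    ∀ᶠ sl' in 𝓝 sl, sl' ∈ OmegaSl C B ξ ∧ OPFmap C B f ξ sl' =
      generation C B (θ + response hbij ((-sl', 0) - (-sl, 0))) := by
  have hcont : Continuous fun sl' : Fin NL → ℝ => (-sl', (0 : ℝ)) := by fun_prop
  have hpos : ∀ᶠ sl' in 𝓝 sl, ∀ j, 0 < sl' j :=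
    Filter.eventually_all.2 fun j => (continuous_apply j).continuousAt.eventually_const_lt (hsl j)
  filter_upwards [(hcont.tendsto sl).eventually (hθ.eventually_isBoxOptimal hbij hactive), hpos]
    with sl' hopt hsl'
  have hmem : sl' ∈ OmegaSl C B ξ := mem_OmegaSl_iff.2 ⟨hsl', _, hopt.1⟩
  exact ⟨hmem, OPFmap_eq hf hξ hmem hopt⟩

theorem hasFDerivAt_OPFmap (hNG : 0 < NG) (hcard : SG.card + SB.card = NG - 1)
    (hperp : Perp C B SG SB) (hf : f ∈ OmegaF C B) (hξ : ξ ∈ OmegaXi C B) (hsl : ∀ j, 0 < sl j)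
    (hθ : IsOptimalAngle C B f ξ sl θ)
    (hactive : activeRows (limitedMap C B) (lowerLimits ξ) (upperLimits ξ) θ ⊆ SG.disjSum SB) :
    OmegaSl C B ξ ∈ 𝓝 sl ∧ HasFDerivAt (OPFmap C B f ξ)
      (LinearMap.toContinuousLinearMap (Jmatrix C B SG SB).mulVecLin) sl := by
  have hbij := bijective_activeMap_of_perp hNG hcard hperp
  have hlocal := eventually_OPFmap_eq hf hξ hsl hθ hbij hactive
  set L := LinearMap.toContinuousLinearMap (Jmatrix C B SG SB).mulVecLin
  have hJ (w) : L w = -generation C B (response hbij (w, 0)) :=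
    LinearMap.congr_fun (mulVecLin_Jmatrix hbij (bijective_Rmat_mulVec hNG hcard hbij).1) w
  have haffine : HasFDerivAt (fun sl' => generation C B θ + (L sl' - L sl)) L sl :=
    (L.hasFDerivAt.sub_const (L sl)).const_add _
  refine ⟨hlocal.mono fun _ h => h.1, haffine.congr_of_eventuallyEq (hlocal.mono ?_)⟩
  rintro sl' ⟨-, heq⟩
  have hneg : ((-sl', 0) - (-sl, 0) : (Fin NL → ℝ) × ℝ) = -(sl' - sl, 0) := by
    ext <;> simp [neg_add_eq_sub]
  rw [heq, hneg, map_neg, map_add, map_neg, ← hJ, map_sub]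

theorem exists_perp_of_hasFDerivWithinAt (hNG : 0 < NG) (hf : f ∈ OmegaF C B)
    (hξ : ξ ∈ OmegaXi C B) (hsl : sl ∈ OmegaSl C B ξ)
    (hregular : ∀ sg θ, IsOptimal C B f ξ sl sg θ → bindingCount C B ξ sg θ = NG - 1 ∧
      LinearIndependent ℝ (fullGrad C B ξ sg θ))
    {J : Matrix (Fin NG) (Fin NL) ℝ} {U : Set (Fin NL → ℝ)} (hU : U ∈ 𝓝 sl)
    (hJ : HasFDerivWithinAt (OPFmap C B f ξ) (LinearMap.toContinuousLinearMap J.mulVecLin) U sl) :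
    ∃ (SG : Finset (Fin NG)) (SB : Finset (Fin E)),
      SG.card + SB.card = NG - 1 ∧ Perp C B SG SB ∧ J = Jmatrix C B SG SB := by
  obtain ⟨⟨sg, θ⟩, hopt : IsOptimal C B f ξ sl sg θ, -⟩ := (hf.2 ξ hξ sl hsl).1
  obtain ⟨hcount, hindep⟩ := hregular sg θ hopt
  obtain ⟨rfl, hθ⟩ := isOptimal_iff.1 hopt
  have hlu := lowerLimits_lt_upperLimits hξ
  have hS := (Finset.toLeft_disjSum_toRight
    (u := activeRows (limitedMap C B) (lowerLimits ξ) (upperLimits ξ) θ)).symm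
  have hcard := (bindingCount_eq_card hlu hS).symm.trans hcount
  have hperp := (linearIndependent_fullGrad_iff hlu hS).1 hindep
  have hderiv := (hasFDerivAt_OPFmap hNG hcard hperp hf hξ hsl.1 hθ hS.le).2
  have heq := LinearMap.toContinuousLinearMap.injective ((hJ.hasFDerivAt hU).unique hderiv)
  exact ⟨_, _, hcard, hperp, toLin'.injective heq⟩

theorem exists_isOptimalAngle_activeRows_eq (hNG : 0 < NG) (hNL : 0 < NL)
    (hConn : ConnectedIncidence C) (hB : B.PosDef) {SG : Finset (Fin NG)} {SB : Finset (Fin E)}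
    (hker : LinearMap.ker (activeMap (balanceMap C B) (limitedMap C B) (SG.disjSum SB)) ≤
      LinearMap.ker (generationCost C B f)) :
    ∃ ξ ∈ OmegaXi C B, ∃ sl θ, (∀ j, 0 < sl j) ∧ IsOptimalAngle C B f ξ sl θ ∧
      activeRows (limitedMap C B) (lowerLimits ξ) (upperLimits ξ) θ = SG.disjSum SB := by
  have hNG' : (0 : ℝ) < NG := Nat.cast_pos.2 hNG
  have hNL' : (0 : ℝ) < NL := Nat.cast_pos.2 hNL
  let share : ℝ := NL / NG
  have hshare : 0 < share := div_pos hNL' hNG'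
  obtain ⟨θ, hθ, href⟩ := exists_laplacian_eq hConn hB (Nat.add_pos_left hNG NL)
    (y := Fin.append (fun _ => share) (-1))
    (by simp [Fin.sum_univ_add, share, mul_div_cancel₀ _ hNG'.ne'])
  obtain ⟨hgen, hload⟩ := mulVec_eq_append_iff.1 hθ
  obtain ⟨l, u, hlu, hgap, hactive, hopt⟩ := exists_box_isBoxOptimal hker θ
    (gap := Sum.elim (fun _ => share) 1) (by rintro (_ | _) <;> simp [hshare])
  have hbal : balanceMap C B θ = (-1, 0) := Prod.ext hload href
  let ξ : XiT NG E := (u ∘ .inl, l ∘ .inl, u ∘ .inr, l ∘ .inr)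
  have hl : lowerLimits ξ = l := Sum.elim_comp_inl_inr l
  have hu : upperLimits ξ = u := Sum.elim_comp_inl_inr u
  have hθopt : IsOptimalAngle C B f ξ 1 θ := by
    rwa [IsOptimalAngle, hl, hu, ← hbal]
  have hnonneg (i) : 0 ≤ ξ.2.1 i := by
    have hle : generation C B θ i - share ≤ ξ.2.1 i := hgap (.inl i)
    rwa [hgen, sub_self] at hle
  have hfeas : (1 : Fin NL → ℝ) ∈ OmegaSl C B ξ :=
    mem_OmegaSl_iff.2 ⟨fun _ => one_pos, θ, hθopt.1⟩
  exact ⟨ξ, ⟨hnonneg, fun i => hlu (.inl i), fun e => hlu (.inr e), 1, hfeas⟩, 1, θ,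
    fun _ => one_pos, hθopt, by rw [hl, hu, hactive]⟩

theorem exists_hasFDerivWithinAt_Jmatrix (hNG : 0 < NG) (hNL : 0 < NL)
    (hConn : ConnectedIncidence C) (hB : B.PosDef) (hcard : SG.card + SB.card = NG - 1)
    (hperp : Perp C B SG SB) :
    ∃ (f : Fin NG → ℝ) (ξ : XiT NG E) (sl : Fin NL → ℝ),
      f ∈ OmegaF C B ∧ ξ ∈ OmegaXi C B ∧ sl ∈ OmegaSl C B ξ ∧
      (∀ sg θ, IsOptimal C B f ξ sl sg θ → bindingCount C B ξ sg θ = NG - 1 ∧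
        LinearIndependent ℝ (fullGrad C B ξ sg θ)) ∧
      ∃ U : Set (Fin NL → ℝ), IsOpen U ∧ sl ∈ U ∧ U ⊆ OmegaSl C B ξ ∧
        HasFDerivWithinAt (OPFmap C B f ξ)
          (LinearMap.toContinuousLinearMap (Jmatrix C B SG SB).mulVecLin) U sl := by
  obtain ⟨f, hf0, hgeneric⟩ := exists_nonneg_isGenericCost hConn hB
  have hf : f ∈ OmegaF C B := mem_OmegaF_of_isGenericCost hConn hB hf0 hgeneric
  have hker := LinearMap.ker_eq_bot.2 (bijective_activeMap_of_perp hNG hcard hperp).1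
  obtain ⟨ξ, hξ, sl, θ, hsl, hθ, hS⟩ :=
    exists_isOptimalAngle_activeRows_eq (f := f) hNG hNL hConn hB (hker.trans_le bot_le)
  have hlu := lowerLimits_lt_upperLimits hξ
  obtain ⟨hnhds, hderiv⟩ := hasFDerivAt_OPFmap hNG hcard hperp hf hξ hsl hθ hS.le
  refine ⟨f, ξ, sl, hf, hξ, mem_of_mem_nhds hnhds, fun sg θ' hopt => ?_, interior (OmegaSl C B ξ),
    isOpen_interior, mem_interior_iff_mem_nhds.2 hnhds, interior_subset, hderiv.hasFDerivWithinAt⟩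
  obtain ⟨rfl, hθ'⟩ := isOptimal_iff.1 hopt
  obtain rfl := hθ.eq hgeneric hθ'
  exact ⟨(bindingCount_eq_card hlu hS).trans hcard, (linearIndependent_fullGrad_iff hlu hS).2 hperp⟩

end OperatorDerivative

end Network

theorem jacobian_range_equiv_general {NG NL E : ℕ} (hNG : 0 < NG) (hNL : 0 < NL)
    (C : Matrix (Fin (NG + NL)) (Fin E) ℝ) (B : Matrix (Fin E) (Fin E) ℝ)
    (hConn : ConnectedIncidence C) (hB : B.PosDef) :
    ({ J : Matrix (Fin NG) (Fin NL) ℝ |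
      ∃ (f : Fin NG → ℝ) (ξ : XiT NG E) (sl : Fin NL → ℝ),
        f ∈ OmegaF C B ∧ ξ ∈ OmegaXi C B ∧ sl ∈ OmegaSl C B ξ ∧
        (∀ sg θ, IsOptimal C B f ξ sl sg θ →
          bindingCount C B ξ sg θ = NG - 1 ∧
          LinearIndependent ℝ (fullGrad C B ξ sg θ)) ∧
        ∃ U : Set (Fin NL → ℝ), IsOpen U ∧ sl ∈ U ∧ U ⊆ OmegaSl C B ξ ∧
          HasFDerivWithinAt (OPFmap C B f ξ)
            (LinearMap.toContinuousLinearMap (Matrix.mulVecLin J)) U sl } =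
    { J : Matrix (Fin NG) (Fin NL) ℝ |
      ∃ (SG : Finset (Fin NG)) (SB : Finset (Fin E)),
        SG.card + SB.card = NG - 1 ∧ Perp C B SG SB ∧ J = Jmatrix C B SG SB }) ∧
    ∀ (SG : Finset (Fin NG)) (SB : Finset (Fin E)),
      SG.card + SB.card = NG - 1 → Perp C B SG SB →
      Function.Bijective (Rmat C B SG SB).mulVec := by
  constructor
  · refine Set.Subset.antisymm ?_ ?_
    · rintro J ⟨f, ξ, sl, hf, hξ, hsl, hregular, U, hU, hslU, -, hJ⟩
      exact exists_perp_of_hasFDerivWithinAt hNG hf hξ hsl hregular (hU.mem_nhds hslU) hJ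
    · rintro J ⟨SG, SB, hcard, hperp, rfl⟩
      exact exists_hasFDerivWithinAt_Jmatrix hNG hNL hConn hB hcard hperp
  · intro SG SB hcard hperp
    exact bijective_Rmat_mulVec hNG hcard (bijective_activeMap_of_perp hNG hcard hperp)

lemma PosDiag.posDef {E : ℕ} {B : Matrix (Fin E) (Fin E) ℝ} (hB : PosDiag B) : B.PosDef := by
  have hdiag : diagonal (fun e => B e e) = B := by
    ext e e'
    rcases eq_or_ne e e' with rfl | hne
    · exact diagonal_apply_eq _ e
    · rw [diagonal_apply_ne _ hne, hB.2 e e' hne]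
  exact hdiag ▸ PosDef.diagonal hB.1

theorem jacobian_range_equiv {NG NL E : ℕ} (hNG : 0 < NG) (hNL : 0 < NL) (hE : 0 < E)
    (C : Matrix (Fin (NG + NL)) (Fin E) ℝ) (B : Matrix (Fin E) (Fin E) ℝ)
    (hInc : IsIncidence C) (hConn : ConnectedIncidence C) (hB : PosDiag B) :
    ({ J : Matrix (Fin NG) (Fin NL) ℝ |
      ∃ (f : Fin NG → ℝ) (ξ : XiT NG E) (sl : Fin NL → ℝ),
        f ∈ OmegaF C B ∧ ξ ∈ OmegaXi C B ∧ sl ∈ OmegaSl C B ξ ∧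
        (∀ sg θ, IsOptimal C B f ξ sl sg θ →
          bindingCount C B ξ sg θ = NG - 1 ∧
          LinearIndependent ℝ (fullGrad C B ξ sg θ)) ∧
        ∃ U : Set (Fin NL → ℝ), IsOpen U ∧ sl ∈ U ∧ U ⊆ OmegaSl C B ξ ∧
          HasFDerivWithinAt (OPFmap C B f ξ)
            (LinearMap.toContinuousLinearMap (Matrix.mulVecLin J)) U sl } =
    { J : Matrix (Fin NG) (Fin NL) ℝ |
      ∃ (SG : Finset (Fin NG)) (SB : Finset (Fin E)),
        SG.card + SB.card = NG - 1 ∧ Perp C B SG SB ∧ J = Jmatrix C B SG SB }) ∧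
    ∀ (SG : Finset (Fin NG)) (SB : Finset (Fin E)),
      SG.card + SB.card = NG - 1 → Perp C B SG SB →
      Function.Bijective (Rmat C B SG SB).mulVec :=
  jacobian_range_equiv_general hNG hNL C B hConn hB.posDef

end
end
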